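/- arXiv:0811.4102 — 6 statements merged into one kernel-verified Lean document; each statement's English description precedes it below -/
import Mathlib

section
/- For all real numbers μ > 0 and ν > 0 and every complex number z, the series ∑_{i=0}^∞ z^i / Γ(μ·i + ν) is (absolutely) summable; consequently the two-parameter Mittag-Leffler function E_{μ,ν} is well defined on all of ℂ. -/
/-!
Restricting Euler's integral to `(T, ∞)` gives `T ^ (s - 1) * exp (-T) ≤ Γ(s)` for `s ≥ 1`. As
`T ≥ 0` is arbitrary, `Γ` outgrows every exponential, so `rⁱ = O(Γ(μ i + ν))` for every `r > 0`.
Taking `r = ‖z‖ + 1` bounds the terms of the series by those of a convergent geometric series.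
-/

open Asymptotics Filter MeasureTheory Set

theorem rpow_mul_exp_neg_le_Gamma {s T : ℝ} (hs : 1 ≤ s) (hT : 0 ≤ T) :
    T ^ (s - 1) * Real.exp (-T) ≤ Real.Gamma s := by
  have hs₀ : 0 < s := zero_lt_one.trans_le hs
  have integrable_Ioi_zero := Real.GammaIntegral_convergent hs₀
  have Ioi_subset : Ioi T ⊆ Ioi 0 := Ioi_subset_Ioi hT
  calc T ^ (s - 1) * Real.exp (-T)
      = ∫ x in Ioi T, Real.exp (-x) * T ^ (s - 1) := by
        rw [integral_mul_const, integral_exp_neg_Ioi, mul_comm]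
    _ ≤ ∫ x in Ioi T, Real.exp (-x) * x ^ (s - 1) := by
        refine setIntegral_mono_on ((integrableOn_exp_neg_Ioi T).mul_const _)
          (integrable_Ioi_zero.mono_set Ioi_subset) measurableSet_Ioi fun x (hx : T < x) ↦ ?_
        have : 0 ≤ s - 1 := sub_nonneg.mpr hs
        gcongr
    _ ≤ ∫ x in Ioi 0, Real.exp (-x) * x ^ (s - 1) := by
        refine setIntegral_mono_set integrable_Ioi_zero ?_ Ioi_subset.eventuallyLE
        filter_upwards [ae_restrict_mem measurableSet_Ioi] with x (hx : 0 < x)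
        exact mul_nonneg (Real.exp_nonneg _) (Real.rpow_nonneg hx.le _)
    _ = Real.Gamma s := (Real.Gamma_eq_integral hs₀).symm

theorem isBigO_rpow_Gamma {b : ℝ} (hb : 0 < b) :
    (fun x : ℝ ↦ b ^ x) =O[atTop] Real.Gamma := by
  refine IsBigO.of_bound (b * Real.exp b) ?_
  filter_upwards [eventually_ge_atTop 1] with x hx
  rw [Real.norm_of_nonneg (Real.rpow_nonneg hb.le x),
    Real.norm_of_nonneg (Real.Gamma_nonneg_of_nonneg (zero_le_one.trans hx))]
  calc b ^ x = b * Real.exp b * (b ^ (x - 1) * Real.exp (-b)) := by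
        rw [Real.rpow_sub_one hb.ne', Real.exp_neg]
        field_simp
    _ ≤ b * Real.exp b * Real.Gamma x := by
        gcongr
        exact rpow_mul_exp_neg_le_Gamma hx hb.le

theorem isBigO_pow_Gamma_mul_add {μ r : ℝ} (hμ : 0 < μ) (ν : ℝ) (hr : 0 < r) :
    (fun i : ℕ ↦ r ^ i) =O[atTop] fun i : ℕ ↦ Real.Gamma (μ * i + ν) := by
  set b : ℝ := r ^ μ⁻¹
  have hb : 0 < b := Real.rpow_pos_of_pos hr _
  have arg_tendsto : Tendsto (fun i : ℕ ↦ μ * i + ν) atTop atTop :=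
    tendsto_atTop_add_const_right _ _ (tendsto_natCast_atTop_atTop.const_mul_atTop hμ)
  have rpow_arg (i : ℕ) : b ^ (μ * i + ν) = b ^ ν * r ^ i := by
    rw [Real.rpow_add hb, Real.rpow_mul hb.le, Real.rpow_inv_rpow hr.le hμ.ne',
      Real.rpow_natCast, mul_comm]
  refine (isBigO_const_mul_left_iff (Real.rpow_pos_of_pos hb ν).ne').mp ?_
  simpa only [Function.comp_def, rpow_arg] using (isBigO_rpow_Gamma hb).comp_tendsto arg_tendsto

theorem isBigO_pow_norm_pow {A : Type*} [SeminormedRing A] (a : A) :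
    (fun i : ℕ ↦ a ^ i) =O[atTop] fun i : ℕ ↦ ‖a‖ ^ i := by
  refine IsBigO.of_norm_eventuallyLE ?_
  filter_upwards [eventually_gt_atTop 0] with i hi
  exact norm_pow_le' a hi

theorem mittagLeffler_summable_general {A : Type*} [SeminormedRing A] [NormedAlgebra ℝ A]
    {μ : ℝ} (hμ : 0 < μ) (ν : ℝ) (z : A) :
    Summable fun i : ℕ ↦ ‖(Real.Gamma (μ * i + ν))⁻¹ • z ^ i‖ := by
  set r : ℝ := ‖z‖ + 1
  have hr : 0 < r := by positivity
  have inv_Gamma_isBigO :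
      (fun i : ℕ ↦ (Real.Gamma (μ * i + ν))⁻¹) =O[atTop] fun i : ℕ ↦ (r ^ i)⁻¹ :=
    (isBigO_pow_Gamma_mul_add hμ ν hr).inv_rev
      (.of_forall fun i h ↦ absurd h (pow_pos hr i).ne')
  have geometric : Summable fun i : ℕ ↦ (r⁻¹ * ‖z‖) ^ i :=
    summable_geometric_of_lt_one (by positivity) ((inv_mul_lt_one₀ hr).mpr (lt_add_one _))
  refine summable_of_isBigO_nat geometric ?_
  simpa only [mul_pow, inv_pow, smul_eq_mul] using
    (inv_Gamma_isBigO.smul (isBigO_pow_norm_pow z)).norm_left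

/-- The two-parameter Mittag-Leffler series `∑ zⁱ / Γ(μ i + ν)` is absolutely
summable for every `z : ℂ`, whenever `μ > 0` and `ν > 0`; hence `E_{μ,ν}` is
well defined on all of `ℂ`. -/
theorem mittagLeffler_summable (μ ν : ℝ) (hμ : 0 < μ) (hν : 0 < ν) (z : ℂ) :
    Summable (fun i : ℕ => ‖z ^ i / (Real.Gamma (μ * i + ν) : ℂ)‖) := by
  simpa only [Complex.real_smul, Complex.ofReal_inv, div_eq_inv_mul] using
    mittagLeffler_summable_general hμ ν z
end

section
/- Let q be a real number with 0 < q < 2 and let λ be a nonzero complex number with |arg λ| < π(1 − q/2). Then the function t ↦ t^{q−1} · E_{q,q}(−λ t^q), defined for t > 0, tends to 0 as t → ∞. (Stability of a single fractional mode: the pole condition |arg λ| < π(1 − q/2) implies the impulse response of 1/(s^q + λ) decays to zero.) -/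
open Real Filter

/-- The two-parameter Mittag-Leffler function `E_{μ,ν}(z) = ∑ zⁱ / Γ(μ i + ν)`. -/
noncomputable def mittagLeffler (μ ν : ℝ) (z : ℂ) : ℂ :=
  ∑' i : ℕ, z ^ i / (Real.Gamma (μ * i + ν) : ℂ)

/-!
Write `f t = t ^ (q - 1) * E_{q,q}(-λ t ^ q)`. The Laplace transform of `t * f t` is
`H s = -d/ds (s ^ q + λ)⁻¹ = q s ^ (q - 1) / (s ^ q + λ) ^ 2`. The pole condition keeps the angle
between `s ^ q` and `λ` away from `π` on the right half-plane, so that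
`|s ^ q + λ| ≥ c (1 + |s| ^ q)` there, and `H` is dominated on all vertical lines by one integrable
function of `Im s`. Far to the right `(s ^ q + λ)⁻¹` is a geometric series in `s ^ (-q)`, and
inverting its derivative term by term recovers the Mittag-Leffler series. By Cauchy's theorem the
line of integration may be moved to `Re s = 1 / t`, where `|exp (s t)| = e`; hence `t * f t` is
bounded. The inverse Laplace transform at `t` is the inverse Mellin transform at `x = exp (-t)`.
-/

section

open MeasureTheory Set Topology Interval
open Complex (I)

lemma eqOn_re_pos_of_eq_ofReal {f g : ℂ → ℂ}
    (hf : DifferentiableOn ℂ f {s | 0 < s.re}) (hg : DifferentiableOn ℂ g {s | 0 < s.re})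
    (h : ∀ r : ℝ, 0 < r → f r = g r) : EqOn f g {s | 0 < s.re} := by
  have hopen : IsOpen {s : ℂ | 0 < s.re} := isOpen_lt continuous_const Complex.continuous_re
  refine (hf.analyticOnNhd hopen).eqOn_of_preconnected_of_frequently_eq (hg.analyticOnNhd hopen)
    (convex_halfSpace_re_gt 0).isPreconnected (z₀ := ((1 : ℝ) : ℂ)) (by simp) ?_
  have hmap : Tendsto ((↑) : ℝ → ℂ) (𝓝[≠] 1) (𝓝[≠] ((1 : ℝ) : ℂ)) :=
    Complex.continuous_ofReal.continuousAt.continuousWithinAt.tendsto_nhdsWithin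
      fun x hx ↦ by simpa using hx
  refine hmap.frequently (Eventually.frequently ?_)
  filter_upwards [nhdsWithin_le_nhds (Ioi_mem_nhds one_pos)] with r hr using h r hr

lemma isBigO_posLog_inv_rpow_atTop {p : ℝ} (hp : p ≠ 0) (g : ℝ → ℝ) :
    (fun x ↦ ((log⁺ x⁻¹ ^ p : ℝ) : ℂ)) =O[atTop] g := by
  refine Asymptotics.IsBigO.of_bound 0 ?_
  filter_upwards [eventually_ge_atTop 1] with x hx
  have hx' : log⁺ x⁻¹ = 0 := by
    rw [posLog_eq_zero_iff, abs_of_pos (by positivity)]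
    exact inv_le_one_of_one_le₀ hx
  simp [hx', zero_rpow hp]

lemma isBigO_posLog_inv_rpow_nhdsGT_zero (p : ℝ) {b : ℝ} (hb : 0 < b) :
    (fun x ↦ ((log⁺ x⁻¹ ^ p : ℝ) : ℂ)) =O[𝓝[>] 0] (· ^ (-b)) := by
  refine Complex.isBigO_ofReal_left.2
    ((isLittleO_abs_log_rpow_rpow_nhdsGT_zero p (neg_neg_of_pos hb)).isBigO.congr' ?_ .rfl)
  filter_upwards [Ioo_mem_nhdsGT one_pos] with x ⟨hx0, hx1⟩
  have hx : 1 ≤ |x⁻¹| := (one_le_inv₀ hx0).2 hx1.le |>.trans (le_abs_self _)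
  rw [posLog_eq_log hx, log_inv, abs_of_neg (log_neg hx0 hx1)]

lemma continuousAt_posLog_inv_rpow {p x : ℝ} (hp : 0 ≤ p) (hx : x ≠ 0) :
    ContinuousAt (fun x ↦ ((log⁺ x⁻¹ ^ p : ℝ) : ℂ)) x := by
  have hlog : ContinuousAt (fun x : ℝ ↦ log⁺ x⁻¹) x :=
    continuous_posLog.continuousAt.comp (continuousAt_inv₀ hx)
  exact Complex.continuous_ofReal.continuousAt.comp (hlog.rpow_const (.inr hp))

lemma locallyIntegrableOn_posLog_inv_rpow {p : ℝ} (hp : 0 ≤ p) :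
    LocallyIntegrableOn (fun x ↦ ((log⁺ x⁻¹ ^ p : ℝ) : ℂ)) (Ioi 0) :=
  ContinuousOn.locallyIntegrableOn
    (fun _ hx ↦ (continuousAt_posLog_inv_rpow hp (ne_of_gt hx)).continuousWithinAt)
    measurableSet_Ioi

lemma mellinConvergent_posLog_inv_rpow {p : ℝ} (hp : 0 < p) {s : ℂ} (hs : 0 < s.re) :
    MellinConvergent (fun x ↦ ((log⁺ x⁻¹ ^ p : ℝ) : ℂ)) s :=
  mellinConvergent_of_isBigO_rpow (locallyIntegrableOn_posLog_inv_rpow hp.le)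
    (isBigO_posLog_inv_rpow_atTop hp.ne' _) (lt_add_one _)
    (isBigO_posLog_inv_rpow_nhdsGT_zero p (half_pos hs)) (half_lt_self hs)

lemma differentiableAt_mellin_posLog_inv_rpow {p : ℝ} (hp : 0 < p) {s : ℂ} (hs : 0 < s.re) :
    DifferentiableAt ℂ (mellin fun x ↦ ((log⁺ x⁻¹ ^ p : ℝ) : ℂ)) s :=
  mellin_differentiableAt_of_isBigO_rpow (locallyIntegrableOn_posLog_inv_rpow hp.le)
    (isBigO_posLog_inv_rpow_atTop hp.ne' _) (lt_add_one _)
    (isBigO_posLog_inv_rpow_nhdsGT_zero p (half_pos hs)) (half_lt_self hs)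

lemma mellin_posLog_inv_rpow_ofReal {p r : ℝ} (hp : 0 < p) (hr : 0 < r) :
    mellin (fun x ↦ ((log⁺ x⁻¹ ^ p : ℝ) : ℂ)) r =
      Real.Gamma (p + 1) * (r : ℂ) ^ (-((p + 1 : ℝ) : ℂ)) := by
  have hexp (u : ℝ) : rexp (-r * u) * log⁺ (rexp (-u))⁻¹ ^ p =
      (Ioi 0).indicator (fun u ↦ u ^ (p + 1 - 1) * rexp (-(r * u))) u := by
    rcases lt_or_ge 0 u with hu | hu
    · simp [hu, hu.le, posLog_apply, ← Real.exp_neg, mul_comm]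
    · simp [hu, hu.not_gt, posLog_apply, ← Real.exp_neg, zero_rpow hp.ne']
  calc mellin (fun x ↦ ((log⁺ x⁻¹ ^ p : ℝ) : ℂ)) r
      = ∫ u : ℝ, ((rexp (-r * u) * log⁺ (rexp (-u))⁻¹ ^ p : ℝ) : ℂ) := by
        simp [mellin_eq_fourier, Real.fourier_eq']
    _ = ((∫ u in Ioi 0, u ^ (p + 1 - 1) * rexp (-(r * u)) : ℝ) : ℂ) := by
        simp_rw [integral_complex_ofReal, hexp, integral_indicator measurableSet_Ioi]
    _ = Real.Gamma (p + 1) * (r : ℂ) ^ (-((p + 1 : ℝ) : ℂ)) := by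
        rw [Real.integral_rpow_mul_exp_neg_mul_Ioi (by positivity) hr, one_div, inv_rpow hr.le,
          ← rpow_neg hr.le, mul_comm, Complex.ofReal_mul, Complex.ofReal_cpow hr.le,
          Complex.ofReal_neg]

lemma mellin_posLog_inv_rpow {p : ℝ} (hp : 0 < p) {s : ℂ} (hs : 0 < s.re) :
    mellin (fun x ↦ ((log⁺ x⁻¹ ^ p : ℝ) : ℂ)) s =
      Real.Gamma (p + 1) * s ^ (-((p + 1 : ℝ) : ℂ)) := by
  refine eqOn_re_pos_of_eq_ofReal
    (g := fun s ↦ Real.Gamma (p + 1) * s ^ (-((p + 1 : ℝ) : ℂ)))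
    (fun z hz ↦ (differentiableAt_mellin_posLog_inv_rpow hp hz).differentiableWithinAt)
    (fun z hz ↦ ?_) (fun r hr ↦ mellin_posLog_inv_rpow_ofReal hp hr) hs
  have hz' : z ∈ Complex.slitPlane := .inl hz
  exact ((differentiableAt_id.cpow_const hz').const_mul _).differentiableWithinAt

lemma integrable_norm_add_mul_I_rpow_neg {a σ : ℝ} (ha : 1 < a) (hσ : σ ≠ 0) :
    Integrable fun ω : ℝ ↦ ‖(σ + ω * I : ℂ)‖ ^ (-a) := by
  have h := ((integrable_rpow_neg_one_add_norm_sq (E := ℝ) (μ := volume) (r := a)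
    (by simpa using ha)).comp_div hσ).const_mul (|σ| ^ (-a))
  refine h.congr (.of_forall fun ω ↦ ?_)
  have hω : σ ^ 2 + ω ^ 2 = σ ^ 2 * (1 + ‖ω / σ‖ ^ 2) := by
    rw [norm_eq_abs, sq_abs]; field_simp
  dsimp only
  rw [Complex.norm_add_mul_I, hω, sqrt_mul (sq_nonneg _), sqrt_sq_eq_abs,
    mul_rpow (abs_nonneg _) (sqrt_nonneg _), sqrt_eq_rpow, ← rpow_mul (by positivity)]
  ring_nf

lemma verticalIntegrable_cpow_neg {a σ : ℝ} (ha : 1 < a) (hσ : σ ≠ 0) :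
    Complex.VerticalIntegrable (fun s ↦ s ^ (-(a : ℂ))) σ := by
  refine (integrable_norm_add_mul_I_rpow_neg ha hσ).mono'
    (Measurable.aestronglyMeasurable (by fun_prop)) (.of_forall fun ω ↦ ?_)
  rw [← Complex.ofReal_neg, Complex.norm_cpow_real]

-- For `x = exp (-t)` the value `log⁺ x⁻¹` is `max t 0`, so this is the inverse Laplace transform of
-- `s ^ (-(p + 1))`.
theorem mellinInv_cpow_neg {p σ x : ℝ} (hp : 0 < p) (hσ : 0 < σ) (hx : 0 < x) :
    mellinInv σ (fun s ↦ s ^ (-((p + 1 : ℝ) : ℂ))) x =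
      ((log⁺ x⁻¹ ^ p / Real.Gamma (p + 1) : ℝ) : ℂ) := by
  have hΓ : Real.Gamma (p + 1) ≠ 0 := (Gamma_pos_of_pos (by positivity)).ne'
  set f : ℝ → ℂ := fun x ↦ ((Real.Gamma (p + 1))⁻¹ : ℝ) • ((log⁺ x⁻¹ ^ p : ℝ) : ℂ)
  have hmellin (ω : ℝ) : mellin f (σ + ω * I) = (σ + ω * I) ^ (-((p + 1 : ℝ) : ℂ)) := by
    rw [mellin_const_smul, mellin_posLog_inv_rpow hp (by simpa using hσ), Complex.real_smul,
      Complex.ofReal_inv, inv_mul_cancel_left₀ (by exact_mod_cast hΓ)]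
  have hcont : ContinuousAt f x := (continuousAt_posLog_inv_rpow hp.le hx.ne').fun_const_smul _
  have hvert : Complex.VerticalIntegrable (mellin f) σ := by
    simpa only [Complex.VerticalIntegrable, hmellin] using
      verticalIntegrable_cpow_neg (by linarith : 1 < p + 1) hσ.ne'
  have hconv : MellinConvergent f σ :=
    (mellinConvergent_posLog_inv_rpow hp (by simpa using hσ)).const_smul _
  calc mellinInv σ (fun s ↦ s ^ (-((p + 1 : ℝ) : ℂ))) x = mellinInv σ (mellin f) x := by
        simp_rw [mellinInv, hmellin]
    _ = f x := mellinInv_mellin_eq σ f hx hconv hvert hcont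
    _ = ((log⁺ x⁻¹ ^ p / Real.Gamma (p + 1) : ℝ) : ℂ) := by
        simp [f, div_eq_inv_mul]

section

variable {E : Type*} [NormedAddCommGroup E] [NormedSpace ℂ E]

lemma norm_ofReal_cpow_neg_add_mul_I {x : ℝ} (hx : 0 < x) (σ ω : ℝ) :
    ‖(x : ℂ) ^ (-(σ + ω * I))‖ = x ^ (-σ) := by
  simp [Complex.norm_cpow_eq_rpow_re_of_pos hx]

lemma continuous_ofReal_cpow_neg_add_mul_I {x : ℝ} (hx : 0 < x) (σ : ℝ) :
    Continuous fun ω : ℝ ↦ (x : ℂ) ^ (-(σ + ω * I)) :=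
  Continuous.const_cpow (by fun_prop) (.inl (by exact_mod_cast hx.ne'))

lemma mellinInv_const_mul (σ : ℝ) (c : ℂ) (F : ℂ → ℂ) (x : ℝ) :
    mellinInv σ (fun s ↦ c * F s) x = c * mellinInv σ F x := by
  simp_rw [mellinInv, smul_eq_mul, mul_left_comm _ c, integral_const_mul, mul_smul_comm]

lemma norm_mellinInv_le {F : ℂ → E} {g : ℝ → ℝ} {σ x : ℝ} (hx : 0 < x) (hg : Integrable g)
    (hF : ∀ᵐ ω : ℝ, ‖F (σ + ω * I)‖ ≤ g ω) :
    ‖mellinInv σ F x‖ ≤ x ^ (-σ) * (1 / (2 * π) * ∫ ω, g ω) := by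
  have hint : ‖∫ ω : ℝ, (x : ℂ) ^ (-(σ + ω * I)) • F (σ + ω * I)‖ ≤ ∫ ω, x ^ (-σ) * g ω := by
    refine norm_integral_le_of_norm_le (hg.const_mul _) ?_
    filter_upwards [hF] with ω hω
    rw [norm_smul, norm_ofReal_cpow_neg_add_mul_I hx]
    gcongr
  rw [mellinInv, norm_smul, norm_of_nonneg (by positivity), mul_left_comm, ← integral_const_mul]
  gcongr

lemma hasSum_mellinInv {ι : Type*} [Countable ι] {F : ι → ℂ → E} {G : ℂ → E} {u : ι → ℝ}
    {g : ℝ → ℝ} {σ x : ℝ} (hx : 0 < x)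
    (hmeas : ∀ i, AEStronglyMeasurable fun ω : ℝ ↦ F i (σ + ω * I)) (hu : Summable u)
    (hg : Integrable g) (hbound : ∀ i, ∀ᵐ ω : ℝ, ‖F i (σ + ω * I)‖ ≤ u i * g ω)
    (hsum : ∀ᵐ ω : ℝ, HasSum (fun i ↦ F i (σ + ω * I)) (G (σ + ω * I))) :
    HasSum (fun i ↦ mellinInv σ (F i) x) (mellinInv σ G x) := by
  refine (hasSum_integral_of_dominated_convergence (fun i ω ↦ x ^ (-σ) * (u i * g ω)) (fun i ↦ ?_)
    (fun i ↦ ?_) (.of_forall fun ω ↦ (hu.mul_right _).mul_left _) ?_ ?_).const_smul (1 / (2 * π))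
  · exact (continuous_ofReal_cpow_neg_add_mul_I hx σ).aestronglyMeasurable.smul (hmeas i)
  · filter_upwards [hbound i] with ω hω
    rw [norm_smul, norm_ofReal_cpow_neg_add_mul_I hx]
    gcongr
  · simp_rw [tsum_mul_left, tsum_mul_right]
    exact (hg.const_mul _).const_mul _
  · filter_upwards [hsum] with ω hω using hω.const_smul _

lemma tendsto_integral_horizontal_zero {f : ℂ → E} {a b : ℝ} {g : ℝ → ℝ}
    (hf : ∀ᶠ ω : ℝ in cocompact ℝ, ∀ σ ∈ [[a, b]], ‖f (σ + ω * I)‖ ≤ g ω)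
    (hg : Tendsto g (cocompact ℝ) (𝓝 0)) :
    Tendsto (fun ω : ℝ ↦ ∫ σ in a..b, f (σ + ω * I)) (cocompact ℝ) (𝓝 0) := by
  have hg' : Tendsto (fun ω ↦ g ω * |b - a|) (cocompact ℝ) (𝓝 0) := by
    simpa using hg.mul_const |b - a|
  exact squeeze_zero_norm' (hf.mono fun ω hω ↦ intervalIntegral.norm_integral_le_of_norm_le_const
    fun σ hσ ↦ hω σ (uIoc_subset_uIcc hσ)) hg'

theorem integral_vertical_eq_of_norm_le {f : ℂ → E} {a b : ℝ} {g : ℝ → ℝ}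
    (hf : DifferentiableOn ℂ f ([[a, b]] ×ℂ univ))
    (ha : Complex.VerticalIntegrable f a) (hb : Complex.VerticalIntegrable f b)
    (hbound : ∀ᶠ ω : ℝ in cocompact ℝ, ∀ σ ∈ [[a, b]], ‖f (σ + ω * I)‖ ≤ g ω)
    (hg : Tendsto g (cocompact ℝ) (𝓝 0)) :
    ∫ ω : ℝ, f (a + ω * I) = ∫ ω : ℝ, f (b + ω * I) := by
  have hhor := tendsto_integral_horizontal_zero hbound hg
  rw [cocompact_eq_atBot_atTop, tendsto_sup] at hhor
  have hvert {c : ℝ} (hc : Complex.VerticalIntegrable f c volume) :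
      Tendsto (fun T : ℝ ↦ ∫ ω in -T..T, f (c + ω * I)) atTop (𝓝 (∫ ω : ℝ, f (c + ω * I))) :=
    intervalIntegral_tendsto_integral hc tendsto_neg_atTop_atBot tendsto_id
  have hrect (T : ℝ) : (∫ σ in a..b, f (σ + (-T : ℝ) * I)) - (∫ σ in a..b, f (σ + T * I)) +
      I • (∫ ω in -T..T, f (b + ω * I)) - I • (∫ ω in -T..T, f (a + ω * I)) = 0 := by
    have hsub : [[a, b]] ×ℂ [[-T, T]] ⊆ [[a, b]] ×ℂ univ :=
      Complex.reProdIm_subset_iff.2 (prod_mono Subset.rfl (subset_univ _))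
    simpa using Complex.integral_boundary_rect_eq_zero_of_differentiableOn f
      (a + (-T : ℝ) * I) (b + T * I) (hf.mono (by simpa using hsub))
  have hlim := (((hhor.1.comp tendsto_neg_atTop_atBot).sub hhor.2).add
    ((hvert hb).const_smul I)).sub ((hvert ha).const_smul I)
  have hzero : (0 : E) - 0 + I • (∫ ω : ℝ, f (b + ω * I)) - I • (∫ ω : ℝ, f (a + ω * I)) = 0 :=
    tendsto_nhds_unique (hlim.congr hrect) tendsto_const_nhds
  rw [sub_zero, zero_add, ← smul_sub, smul_eq_zero_iff_right Complex.I_ne_zero] at hzero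
  exact (sub_eq_zero.1 hzero).symm

theorem mellinInv_eq_mellinInv_of_norm_le {F : ℂ → E} {g : ℝ → ℝ}
    (hF : DifferentiableOn ℂ F {s | 0 < s.re}) (hg : Integrable g)
    (hg0 : Tendsto g (cocompact ℝ) (𝓝 0))
    (hbound : ∀ s : ℂ, 0 < s.re → s.im ≠ 0 → ‖F s‖ ≤ g s.im)
    {a b x : ℝ} (ha : 0 < a) (hb : 0 < b) (hx : 0 < x) :
    mellinInv a F x = mellinInv b F x := by
  have hpos {σ : ℝ} (hσ : σ ∈ [[a, b]]) : 0 < σ := (lt_min ha hb).trans_le hσ.1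
  have hbound' {σ ω : ℝ} (hσ : 0 < σ) (hω : ω ≠ 0) : ‖F (σ + ω * I)‖ ≤ g ω := by
    simpa using hbound (σ + ω * I) (by simpa using hσ) (by simpa using hω)
  have hint {σ : ℝ} (hσ : 0 < σ) :
      Complex.VerticalIntegrable (fun s ↦ (x : ℂ) ^ (-s) • F s) σ := by
    have hline : Continuous fun ω : ℝ ↦ F (σ + ω * I) :=
      hF.continuousOn.comp_continuous (by fun_prop) fun ω ↦ by simpa using hσ
    refine (hg.const_mul (x ^ (-σ))).mono'
      ((continuous_ofReal_cpow_neg_add_mul_I hx σ).smul hline).aestronglyMeasurable ?_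
    filter_upwards [Measure.ae_ne volume 0] with ω hω
    rw [norm_smul, norm_ofReal_cpow_neg_add_mul_I hx]
    gcongr
    exact hbound' hσ hω
  obtain ⟨M, hM⟩ := isCompact_uIcc.exists_bound_of_continuousOn (s := [[a, b]])
    (f := fun σ ↦ x ^ (-σ)) (Continuous.continuousOn (by fun_prop (disch := exact hx.ne')))
  have hdiff : DifferentiableOn ℂ (fun s ↦ (x : ℂ) ^ (-s) • F s) ([[a, b]] ×ℂ univ) := by
    have hcpow : Differentiable ℂ fun s : ℂ ↦ (x : ℂ) ^ (-s) := fun s ↦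
      differentiableAt_id.neg.const_cpow (.inl (by exact_mod_cast hx.ne'))
    exact hcpow.differentiableOn.smul (hF.mono fun s hs ↦ hpos hs.1)
  rw [mellinInv, mellinInv, integral_vertical_eq_of_norm_le (g := fun ω ↦ M * g ω) hdiff (hint ha)
    (hint hb) ?_ (by simpa using hg0.const_mul M)]
  filter_upwards [(finite_singleton (0 : ℝ)).isCompact.compl_mem_cocompact] with ω hω σ hσ
  rw [norm_smul, norm_ofReal_cpow_neg_add_mul_I hx]
  gcongr
  · exact (norm_nonneg _).trans (hM σ hσ)
  · exact (le_abs_self _).trans (hM σ hσ)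
  · exact hbound' (hpos hσ) hω

end

lemma integrable_of_even_of_integrableOn_Ioi {E : Type*} [NormedAddCommGroup E] {f : ℝ → E}
    (hf : f.Even) (h : IntegrableOn f (Ioi 0)) : Integrable f := by
  have hneg : IntegrableOn f (Iio 0) := by
    rw [← neg_zero] at h
    exact h.comp_neg_Iio.congr_fun (fun ω _ ↦ hf ω) measurableSet_Iio
  rw [← integrableOn_univ, ← Iio_union_Ici (a := (0 : ℝ)), integrableOn_union,
    integrableOn_Ici_iff_integrableOn_Ioi]
  exact ⟨hneg, h⟩

/-- Integrable majorant, common to all vertical lines, of a transform with a singularity of order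
`1 - p` at `0` and decay of order `1 + p` at `∞`. Substituting `u = ω ^ p` on `(0, ∞)` turns it
into a multiple of `1 / (1 + u²)`. -/
noncomputable def verticalMajorant (p ω : ℝ) : ℝ :=
  |ω| ^ (p - 1) * (1 + |ω| ^ (2 * p))⁻¹

lemma integrableOn_Ioi_verticalMajorant {p : ℝ} (hp : p ≠ 0) :
    IntegrableOn (verticalMajorant p) (Ioi 0) := by
  have h := (integrableOn_Ioi_comp_rpow_iff' (fun u : ℝ ↦ (1 + u ^ 2)⁻¹) hp).2
    integrable_inv_one_add_sq.integrableOn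
  refine h.congr_fun (fun ω hω ↦ ?_) measurableSet_Ioi
  rw [verticalMajorant, abs_of_pos hω, mul_comm 2 p, rpow_mul (le_of_lt hω), rpow_two]
  rfl

lemma integrable_verticalMajorant {p : ℝ} (hp : p ≠ 0) : Integrable (verticalMajorant p) :=
  integrable_of_even_of_integrableOn_Ioi (fun ω ↦ by simp only [verticalMajorant, abs_neg])
    (integrableOn_Ioi_verticalMajorant hp)

lemma verticalMajorant_le {p ω : ℝ} (hω : ω ≠ 0) :
    verticalMajorant p ω ≤ |ω| ^ (-(p + 1)) := by
  have hω' : 0 < |ω| := abs_pos.2 hω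
  calc verticalMajorant p ω ≤ |ω| ^ (p - 1) * (|ω| ^ (2 * p))⁻¹ := by
        unfold verticalMajorant
        gcongr
        linarith
    _ = |ω| ^ (-(p + 1)) := by rw [← rpow_neg hω'.le, ← rpow_add hω']; ring_nf

lemma verticalMajorant_nonneg (p ω : ℝ) : 0 ≤ verticalMajorant p ω := by
  unfold verticalMajorant; positivity

lemma tendsto_verticalMajorant_cocompact {p : ℝ} (hp : 0 < p + 1) :
    Tendsto (verticalMajorant p) (cocompact ℝ) (𝓝 0) := by
  have habs : Tendsto (fun ω : ℝ ↦ |ω|) (cocompact ℝ) atTop := tendsto_norm_cocompact_atTop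
  refine squeeze_zero' (.of_forall (verticalMajorant_nonneg p)) ?_
    ((tendsto_rpow_neg_atTop hp).comp habs)
  filter_upwards [(finite_singleton (0 : ℝ)).isCompact.compl_mem_cocompact] with ω hω
  exact verticalMajorant_le hω

lemma verticalMajorant_anti {p ω ω' : ℝ} (hp0 : 0 ≤ p) (hp1 : p ≤ 1) (hω : ω ≠ 0)
    (h : |ω| ≤ |ω'|) : verticalMajorant p ω' ≤ verticalMajorant p ω := by
  unfold verticalMajorant
  gcongr ?_ * (1 + ?_)⁻¹
  · exact rpow_le_rpow_of_nonpos (abs_pos.2 hω) h (by linarith)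
  · exact rpow_le_rpow (abs_nonneg _) h (by linarith)

lemma cos_half_mul_norm_add_norm_le {V : Type*} [NormedAddCommGroup V] [InnerProductSpace ℝ V]
    {x y : V} {ψ : ℝ} (h : InnerProductGeometry.angle x y ≤ ψ) (hψ : ψ ≤ π) :
    cos (ψ / 2) * (‖x‖ + ‖y‖) ≤ ‖x + y‖ := by
  have hinner : cos ψ * (‖x‖ * ‖y‖) ≤ inner ℝ x y := by
    rw [← InnerProductGeometry.cos_angle_mul_norm_mul_norm]
    gcongr
    exact cos_le_cos_of_nonneg_of_le_pi (InnerProductGeometry.angle_nonneg x y) hψ h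
  have hcos : cos ψ = 2 * cos (ψ / 2) ^ 2 - 1 := by rw [← cos_two_mul]; ring_nf
  refine le_of_sq_le_sq ?_ (norm_nonneg _)
  rw [norm_add_sq_real]
  nlinarith [mul_nonneg (sq_nonneg (‖x‖ - ‖y‖)) (sub_nonneg.2 (cos_sq_le_one (ψ / 2)))]

lemma angle_le_abs_arg_add_abs_arg {z w : ℂ} (hz : z ≠ 0) (hw : w ≠ 0) :
    InnerProductGeometry.angle z w ≤ |z.arg| + |w.arg| := by
  rw [← Complex.angle_one_right hz, ← Complex.angle_one_left hw]
  exact InnerProductGeometry.angle_le_angle_add_angle z 1 w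

lemma abs_arg_cpow_ofReal_le {z : ℂ} (hz : z ≠ 0) (r : ℝ) :
    |(z ^ (r : ℂ)).arg| ≤ |r| * |z.arg| := by
  rw [← abs_mul]
  rcases lt_or_ge |r * z.arg| π with h | h
  · have him : (Complex.log z * r).im = r * z.arg := by
      rw [Complex.im_mul_ofReal, Complex.log_im, mul_comm]
    obtain ⟨hlow, hup⟩ := abs_lt.1 h
    rw [Complex.cpow_def_of_ne_zero hz, ← Complex.log_im,
      Complex.log_exp (by rwa [him]) (him ▸ hup.le), him]
  · exact (Complex.abs_arg_le_pi _).trans h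

theorem exists_pos_mul_one_add_rpow_le_norm_cpow_add {q : ℝ} {l : ℂ} (hq : 0 ≤ q) (hl : l ≠ 0)
    (harg : |l.arg| < π * (1 - q / 2)) :
    ∃ c > 0, ∀ s : ℂ, 0 < s.re → c * (1 + ‖s‖ ^ q) ≤ ‖s ^ (q : ℂ) + l‖ := by
  set ψ := q * (π / 2) + |l.arg|
  have hψ : ψ < π := by simp only [ψ]; linarith
  have hψ0 : 0 ≤ ψ := by positivity
  have hcos : 0 < cos (ψ / 2) := cos_pos_of_mem_Ioo ⟨by linarith [pi_pos], by linarith⟩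
  refine ⟨cos (ψ / 2) * min 1 ‖l‖, mul_pos hcos (lt_min one_pos (norm_pos_iff.2 hl)),
    fun s hs ↦ ?_⟩
  have hs0 : s ≠ 0 := by rintro rfl; simp at hs
  have hangle : InnerProductGeometry.angle (s ^ (q : ℂ)) l ≤ ψ := calc
    _ ≤ |(s ^ (q : ℂ)).arg| + |l.arg| :=
      angle_le_abs_arg_add_abs_arg (by simp [Complex.cpow_eq_zero_iff, hs0]) hl
    _ ≤ q * (π / 2) + |l.arg| := by
      grw [abs_arg_cpow_ofReal_le hs0, abs_of_nonneg hq,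
        Complex.abs_arg_le_pi_div_two_iff.2 hs.le]
  calc cos (ψ / 2) * min 1 ‖l‖ * (1 + ‖s‖ ^ q)
      ≤ cos (ψ / 2) * (‖s ^ (q : ℂ)‖ + ‖l‖) := by
        rw [mul_assoc, Complex.norm_cpow_real]
        gcongr
        nlinarith [min_le_left 1 ‖l‖, min_le_right 1 ‖l‖, rpow_nonneg (norm_nonneg s) q]
    _ ≤ ‖s ^ (q : ℂ) + l‖ := cos_half_mul_norm_add_norm_le hangle hψ.le

/-- The function `-d/ds (s ^ q + l)⁻¹`, which is the Laplace transform of `t ↦ t * f t` when `f` is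
the impulse response of `1 / (s ^ q + l)`. -/
noncomputable def negDerivTransfer (q : ℝ) (l s : ℂ) : ℂ :=
  q * s ^ ((q : ℂ) - 1) / (s ^ (q : ℂ) + l) ^ 2

/-- The `k`-th term of the expansion of `negDerivTransfer q l` at `∞`, obtained by differentiating
the geometric series of `1 / (s ^ q + l)` in powers of `s ^ (-q)`. -/
noncomputable def negDerivTransferTerm (q : ℝ) (l : ℂ) (k : ℕ) (s : ℂ) : ℂ :=
  ((q * (k + 1) : ℝ) : ℂ) * (-l) ^ k * s ^ (-((q * (k + 1) + 1 : ℝ) : ℂ))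

/-- The impulse response of `1 / (s ^ q + l)`. -/
noncomputable def fractionalMode (q : ℝ) (l : ℂ) (t : ℝ) : ℂ :=
  ((t ^ (q - 1) : ℝ) : ℂ) * mittagLeffler q q (-(l * (t ^ q : ℝ)))

lemma differentiableOn_negDerivTransfer {q : ℝ} {l : ℂ}
    (h : ∀ s : ℂ, 0 < s.re → s ^ (q : ℂ) + l ≠ 0) :
    DifferentiableOn ℂ (negDerivTransfer q l) {s | 0 < s.re} := by
  intro s hs
  have hcpow (z : ℂ) : DifferentiableAt ℂ (fun s : ℂ ↦ s ^ z) s :=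
    differentiableAt_id.cpow_const (.inl hs)
  exact (((hcpow _).const_mul _).fun_div (((hcpow _).add_const l).fun_pow 2)
    (pow_ne_zero 2 (h s hs))).differentiableWithinAt

lemma norm_negDerivTransfer_le {q c : ℝ} {l s : ℂ} (hq : 0 ≤ q) (hc : 0 < c) (hs : s ≠ 0)
    (hlow : c * (1 + ‖s‖ ^ q) ≤ ‖s ^ (q : ℂ) + l‖) :
    ‖negDerivTransfer q l s‖ ≤ q / c ^ 2 * verticalMajorant (q / 2) ‖s‖ := by
  have hr : 0 < ‖s‖ := norm_pos_iff.2 hs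
  have hsq : ‖s‖ ^ q = (‖s‖ ^ (q / 2)) ^ 2 := by
    rw [← rpow_natCast, ← rpow_mul hr.le]; norm_num
  have hhalf : ‖s‖ ^ (q / 2) ≤ 1 + ‖s‖ ^ q := by
    rw [hsq]; nlinarith [sq_nonneg (‖s‖ ^ (q / 2) - 1), rpow_nonneg hr.le (q / 2)]
  have hnum : ‖s ^ ((q : ℂ) - 1)‖ = ‖s‖ ^ (q / 2 - 1) * ‖s‖ ^ (q / 2) := by
    rw [← Complex.ofReal_one, ← Complex.ofReal_sub, Complex.norm_cpow_real, ← rpow_add hr]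
    ring_nf
  calc ‖negDerivTransfer q l s‖
      = q * (‖s‖ ^ (q / 2 - 1) * ‖s‖ ^ (q / 2)) / ‖s ^ (q : ℂ) + l‖ ^ 2 := by
        rw [negDerivTransfer, norm_div, norm_mul, norm_pow, hnum, Complex.norm_real,
          norm_of_nonneg hq]
    _ ≤ q * (‖s‖ ^ (q / 2 - 1) * (1 + ‖s‖ ^ q)) / (c * (1 + ‖s‖ ^ q)) ^ 2 := by gcongr
    _ = q / c ^ 2 * verticalMajorant (q / 2) ‖s‖ := by
        rw [verticalMajorant, abs_norm, mul_div_cancel₀ q two_ne_zero]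
        field_simp

lemma norm_negDerivTransfer_le_im {q c : ℝ} {l s : ℂ} (hq0 : 0 ≤ q) (hq2 : q ≤ 2) (hc : 0 < c)
    (hs : s.im ≠ 0) (hlow : c * (1 + ‖s‖ ^ q) ≤ ‖s ^ (q : ℂ) + l‖) :
    ‖negDerivTransfer q l s‖ ≤ q / c ^ 2 * verticalMajorant (q / 2) s.im := by
  have hs0 : s ≠ 0 := by rintro rfl; simp at hs
  refine (norm_negDerivTransfer_le hq0 hc hs0 hlow).trans ?_
  gcongr
  exact verticalMajorant_anti (by linarith) (by linarith) hs
    (by simpa using Complex.abs_im_le_norm s)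

lemma cpow_neg_mul_add_one (q : ℝ) {s : ℂ} (hs : s ≠ 0) (k : ℕ) :
    s ^ (-((q * (k + 1) + 1 : ℝ) : ℂ)) =
      s ^ ((q : ℂ) - 1) / (s ^ (q : ℂ)) ^ 2 * ((s ^ (q : ℂ)) ^ k)⁻¹ := by
  rw [← Complex.cpow_mul_nat, ← Complex.cpow_mul_nat, ← Complex.cpow_sub _ _ hs,
    ← Complex.cpow_neg, ← Complex.cpow_add _ _ hs]
  congr 1
  push_cast
  ring

lemma hasSum_negDerivTransferTerm {q : ℝ} {l s : ℂ} (hs : s ≠ 0) (hl : ‖l‖ < ‖s‖ ^ q) :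
    HasSum (fun k ↦ negDerivTransferTerm q l k s) (negDerivTransfer q l s) := by
  rw [← Complex.norm_cpow_real] at hl
  have hw : s ^ (q : ℂ) ≠ 0 := by simp [Complex.cpow_eq_zero_iff, hs]
  have hratio : ‖-l / s ^ (q : ℂ)‖ < 1 := by
    rwa [norm_div, norm_neg, div_lt_one (norm_pos_iff.2 hw)]
  have hval : q * s ^ ((q : ℂ) - 1) / (s ^ (q : ℂ)) ^ 2 * (1 / (1 - -l / s ^ (q : ℂ)) ^ (1 + 1)) =
      negDerivTransfer q l s := by
    have hden : 1 - -l / s ^ (q : ℂ) = (s ^ (q : ℂ) + l) / s ^ (q : ℂ) := by field_simp; ring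
    rw [negDerivTransfer, hden, div_pow]
    field_simp
  have hsum := (hasSum_choose_mul_geometric_of_norm_lt_one 1 hratio).mul_left
    (q * s ^ ((q : ℂ) - 1) / (s ^ (q : ℂ)) ^ 2)
  rw [hval] at hsum
  have hterm (k : ℕ) : q * s ^ ((q : ℂ) - 1) / (s ^ (q : ℂ)) ^ 2 *
      (((k + 1).choose 1 : ℕ) * (-l / s ^ (q : ℂ)) ^ k) = negDerivTransferTerm q l k s := by
    rw [negDerivTransferTerm, cpow_neg_mul_add_one q hs, div_pow, Nat.choose_one_right]
    push_cast
    ring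
  simpa only [hterm] using hsum

lemma norm_negDerivTransferTerm_le {q σ : ℝ} (hq : 0 ≤ q) (hσ : 0 < σ) (l : ℂ) {s : ℂ}
    (hs : σ ≤ ‖s‖) (k : ℕ) :
    ‖negDerivTransferTerm q l k s‖ ≤
      q * ((k + 1) * (‖l‖ / σ ^ q) ^ k) * ‖s‖ ^ (-(q + 1)) := by
  have hr : 0 < ‖s‖ := hσ.trans_le hs
  have hsplit : ‖s‖ ^ (-(q * (k + 1) + 1)) = ((‖s‖ ^ q) ^ k)⁻¹ * ‖s‖ ^ (-(q + 1)) := by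
    rw [← rpow_mul_natCast hr.le, ← rpow_neg hr.le, ← rpow_add hr]
    ring_nf
  calc _ = q * (k + 1) * ‖l‖ ^ k * (((‖s‖ ^ q) ^ k)⁻¹ * ‖s‖ ^ (-(q + 1))) := by
        rw [negDerivTransferTerm, norm_mul, norm_mul, norm_pow, norm_neg, ← Complex.ofReal_neg,
          Complex.norm_cpow_real, Complex.norm_real, norm_of_nonneg (by positivity), hsplit]
    _ ≤ q * (k + 1) * ‖l‖ ^ k * (((σ ^ q) ^ k)⁻¹ * ‖s‖ ^ (-(q + 1))) := by gcongr
    _ = q * ((k + 1) * (‖l‖ / σ ^ q) ^ k) * ‖s‖ ^ (-(q + 1)) := by rw [div_pow]; ring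

lemma summable_add_one_mul_geometric {r : ℝ} (hr : ‖r‖ < 1) :
    Summable fun k : ℕ ↦ (k + 1) * r ^ k := by
  simpa using (hasSum_choose_mul_geometric_of_norm_lt_one 1 hr).summable

lemma mellinInv_negDerivTransferTerm {q σ t : ℝ} (hq : 0 < q) (hσ : 0 < σ) (ht : 0 < t) (l : ℂ)
    (k : ℕ) :
    mellinInv σ (negDerivTransferTerm q l k) (rexp (-t)) =
      t * ((t ^ (q - 1) : ℝ) : ℂ) * ((-(l * (t ^ q : ℝ))) ^ k / (Real.Gamma (q * k + q) : ℂ)) := by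
  have hp : 0 < q * (k + 1) := by positivity
  have hΓ : (Real.Gamma (q * (k + 1)) : ℂ) ≠ 0 := by exact_mod_cast (Gamma_pos_of_pos hp).ne'
  have hp' : ((q * (k + 1) : ℝ) : ℂ) ≠ 0 := by exact_mod_cast hp.ne'
  have hlog : log⁺ (rexp (-t))⁻¹ = t := by simp [← Real.exp_neg, posLog_apply, ht.le]
  have hpow : t ^ (q * (k + 1)) = t * t ^ (q - 1) * (t ^ q) ^ k := by
    rw [← rpow_one_add' ht.le (by simpa using hq.ne'), ← rpow_mul_natCast ht.le, ← rpow_add ht]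
    ring_nf
  unfold negDerivTransferTerm
  rw [mellinInv_const_mul, mellinInv_cpow_neg hp hσ (exp_pos _), hlog, Gamma_add_one hp.ne', hpow,
    show q * k + q = q * (k + 1) by ring, Complex.ofReal_div, Complex.ofReal_mul (q * (k + 1)),
    neg_mul_eq_neg_mul, mul_pow]
  field_simp
  push_cast
  ring

theorem mellinInv_negDerivTransfer {q σ t : ℝ} {l : ℂ} (hq : 0 < q) (hσ : 0 < σ) (ht : 0 < t)
    (hl : ‖l‖ < σ ^ q) :
    mellinInv σ (negDerivTransfer q l) (rexp (-t)) = t * fractionalMode q l t := by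
  have hnorm (ω : ℝ) : σ ≤ ‖(σ + ω * I : ℂ)‖ := by
    simpa [abs_of_pos hσ] using Complex.abs_re_le_norm (σ + ω * I : ℂ)
  have hratio : ‖‖l‖ / σ ^ q‖ < 1 := by
    rwa [norm_of_nonneg (by positivity), div_lt_one (by positivity)]
  have hsum : HasSum (fun k ↦ mellinInv σ (negDerivTransferTerm q l k) (rexp (-t)))
      (mellinInv σ (negDerivTransfer q l) (rexp (-t))) := by
    refine hasSum_mellinInv (exp_pos _)
      (fun k ↦ Measurable.aestronglyMeasurable (by unfold negDerivTransferTerm; fun_prop))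
      ((summable_add_one_mul_geometric hratio).mul_left q)
      (integrable_norm_add_mul_I_rpow_neg (by linarith : 1 < q + 1) hσ.ne')
      (fun k ↦ .of_forall fun ω ↦ norm_negDerivTransferTerm_le hq.le hσ l (hnorm ω) k)
      (.of_forall fun ω ↦ hasSum_negDerivTransferTerm (norm_pos_iff.1 (hσ.trans_le (hnorm ω)))
        (hl.trans_le ?_))
    gcongr
    exact hnorm ω
  rw [← hsum.tsum_eq, fractionalMode, mittagLeffler, ← mul_assoc, ← tsum_mul_left]
  exact tsum_congr fun k ↦ mellinInv_negDerivTransferTerm hq hσ ht l k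

lemma norm_mul_fractionalMode_le {q c : ℝ} {l : ℂ} (hq0 : 0 < q) (hq2 : q ≤ 2) (hc : 0 < c)
    (hlow : ∀ s : ℂ, 0 < s.re → c * (1 + ‖s‖ ^ q) ≤ ‖s ^ (q : ℂ) + l‖) {t : ℝ} (ht : 0 < t) :
    ‖t * fractionalMode q l t‖ ≤
      rexp 1 * (1 / (2 * π) * ∫ ω, q / c ^ 2 * verticalMajorant (q / 2) ω) := by
  have hint := (integrable_verticalMajorant (half_pos hq0).ne').const_mul (q / c ^ 2)
  have hlim : Tendsto (fun ω ↦ q / c ^ 2 * verticalMajorant (q / 2) ω) (cocompact ℝ) (𝓝 0) := by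
    simpa using (tendsto_verticalMajorant_cocompact (by linarith : 0 < q / 2 + 1)).const_mul _
  have hbound (s : ℂ) (hs : 0 < s.re) (hs' : s.im ≠ 0) :=
    norm_negDerivTransfer_le_im hq0.le hq2 hc hs' (hlow s hs)
  have hdiff : DifferentiableOn ℂ (negDerivTransfer q l) {s | 0 < s.re} :=
    differentiableOn_negDerivTransfer fun s hs ↦
      norm_pos_iff.1 ((by positivity : 0 < c * (1 + ‖s‖ ^ q)).trans_le (hlow s hs))
  obtain ⟨σ, hσl, hσ⟩ : ∃ σ : ℝ, ‖l‖ < σ ^ q ∧ 0 < σ :=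
    (((tendsto_rpow_atTop hq0).eventually_gt_atTop ‖l‖).and (eventually_gt_atTop 0)).exists
  have ht' : 0 < t⁻¹ := inv_pos.2 ht
  have hexp : rexp (-t) ^ (-t⁻¹) = rexp 1 := by
    rw [← Real.exp_mul, neg_mul_neg, mul_inv_cancel₀ ht.ne']
  rw [← mellinInv_negDerivTransfer hq0 hσ ht hσl, mellinInv_eq_mellinInv_of_norm_le hdiff hint hlim
    hbound hσ ht' (exp_pos _), ← hexp]
  refine norm_mellinInv_le (exp_pos _) hint ?_
  filter_upwards [Measure.ae_ne volume 0] with ω hω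
  simpa using hbound (t⁻¹ + ω * I) (by simpa using ht) (by simpa using hω)

theorem fractionalMode_isBigO_inv {q c : ℝ} {l : ℂ} (hq0 : 0 < q) (hq2 : q ≤ 2) (hc : 0 < c)
    (hlow : ∀ s : ℂ, 0 < s.re → c * (1 + ‖s‖ ^ q) ≤ ‖s ^ (q : ℂ) + l‖) :
    fractionalMode q l =O[atTop] fun t : ℝ ↦ t⁻¹ := by
  refine .of_bound (rexp 1 * (1 / (2 * π) * ∫ ω, q / c ^ 2 * verticalMajorant (q / 2) ω)) ?_
  filter_upwards [eventually_gt_atTop 0] with t ht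
  have h := norm_mul_fractionalMode_le hq0 hq2 hc hlow ht
  rw [norm_mul, Complex.norm_real] at h
  rwa [norm_inv, ← div_eq_mul_inv, le_div_iff₀' (norm_pos_iff.2 ht.ne')]

end

/-- Stability of a single fractional mode: if `0 < q < 2` and the pole `λ ≠ 0`
satisfies `|arg λ| < π (1 - q/2)`, then the impulse response
`t ↦ t^{q-1} E_{q,q}(-λ t^q)` of `1/(s^q + λ)` tends to `0` as `t → ∞`. -/
theorem fractional_mode_stable (q : ℝ) (hq0 : 0 < q) (hq2 : q < 2)
    (lambda : ℂ) (hl : lambda ≠ 0)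
    (harg : |Complex.arg lambda| < π * (1 - q / 2)) :
    Tendsto (fun t : ℝ => ((t ^ (q - 1) : ℝ) : ℂ) *
        mittagLeffler q q (-(lambda * (t ^ q : ℝ)))) atTop (nhds 0) := by
  obtain ⟨c, hc, hlow⟩ := exists_pos_mul_one_add_rpow_le_norm_cpow_add hq0.le hl harg
  exact (fractionalMode_isBigO_inv hq0 hq2.le hc hlow).trans_tendsto tendsto_inv_atTop_zero
end

section
/- Let q be a real number with 0 < q < 2 and let λ be a nonzero complex number with |arg λ| < π(1 − q/2). Then the function t ↦ t^{q−1} · E_{q,q}(−λ t^q) is integrable on (0, ∞). (BIBO stability of the fractional transfer function 1/(s^q + λ): its impulse response is absolutely integrable.) -/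
open Real MeasureTheory Set

/-!
In the coordinate `s = exp w`, Hankel's formula writes `2πi / Γ(a)` as the integral of the entire
function `exp (exp w + (1 - a) w)` along the boundary of a half strip `re w ≥ c`, `|im w| ≤ θ` with
`π / 2 < θ ≤ π`. For `re a < 1` it follows by letting `c → -∞`, moving both rays to the height
`±π` and using the reflection formula; both sides are entire in `a`.

For large `c` the series of `E_{μ,ν}(z)` can be summed under the integral, which gives a contour
integral with denominator `exp (μ w) - z`. If `z = -y` with `|arg y| < π (1 - μ / 2)`, one can take
`θ > π / 2` so close to `π / 2` that `exp (μ w)` stays in a sector away from the ray through `-y`.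
Then the denominator is at least of the order of `‖y‖` on the whole half strip with `c = 0`, so the
contour may be pulled back to `c = 0` and `E_{μ,ν}(-y) = O(1 / ‖y‖)`. For `ν = 0` the constant term
`1 / Γ(0)` vanishes, so `E_{μ,0}(-y) = -y E_{μ,μ}(-y)` and `E_{μ,μ}(-y) = O(1 / ‖y‖²)`. The impulse
response is therefore `O(t^{q-1})` at `0` and `O(t^{-q-1})` at infinity.
-/

open Filter Topology
open Complex (I)

section IntegralLemmas

variable {k b : ℝ}

lemma tendsto_exp_mul_exp_add_mul_atTop (hk : k < 0) (b : ℝ) :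
    Tendsto (fun u : ℝ => rexp (k * rexp u + b * u)) atTop (𝓝 0) := by
  have h := (tendsto_rpow_mul_exp_neg_mul_atTop_nhds_zero b (-k) (by linarith)).comp
    Real.tendsto_exp_atTop
  refine h.congr fun u => ?_
  simp only [Function.comp_apply, ← Real.exp_mul, ← Real.exp_add, neg_neg]
  ring_nf

lemma tendsto_exp_mul_exp_add_mul_atBot (k : ℝ) (hb : 0 < b) :
    Tendsto (fun u : ℝ => rexp (k * rexp u + b * u)) atBot (𝓝 0) :=
  Real.tendsto_exp_atBot.comp
    ((Real.tendsto_exp_atBot.const_mul k).add_atBot (tendsto_id.const_mul_atBot hb))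

lemma integrableOn_exp_mul_exp_add_mul_Ioi (hk : k < 0) (b c : ℝ) :
    IntegrableOn (fun u : ℝ => rexp (k * rexp u + b * u)) (Ioi c) := by
  refine integrable_of_isBigO_exp_neg one_pos (by fun_prop) (.of_bound 1 ?_)
  filter_upwards [(tendsto_exp_mul_exp_add_mul_atTop hk (b + 1)).eventually (ge_mem_nhds one_pos)]
    with u hu
  rw [Real.exp_le_one_iff] at hu
  rw [Real.norm_of_nonneg (Real.exp_pos _).le, Real.norm_of_nonneg (Real.exp_pos _).le, one_mul]
  exact Real.exp_le_exp.2 (by linarith)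

lemma integrable_exp_mul_exp_add_mul (hk : k < 0) (hb : 0 < b) :
    Integrable (fun u : ℝ => rexp (k * rexp u + b * u)) := by
  rw [← integrableOn_univ, ← Iic_union_Ioi (a := (0 : ℝ))]
  refine IntegrableOn.union ?_ (integrableOn_exp_mul_exp_add_mul_Ioi hk b 0)
  refine (integrableOn_exp_mul_Iic hb 0).mono' (by fun_prop) (ae_of_all _ fun u => ?_)
  rw [Real.norm_of_nonneg (Real.exp_pos _).le, Real.exp_le_exp]
  nlinarith [Real.exp_pos u]

lemma integral_exp_neg_exp_add_mul {s : ℂ} (hs : 0 < s.re) :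
    ∫ u : ℝ, Complex.exp (-Complex.exp u + s * u) = Complex.Gamma s := by
  rw [Complex.Gamma_eq_integral hs, Complex.GammaIntegral, ← Real.range_exp, ← image_univ,
    integral_image_eq_integral_abs_deriv_smul MeasurableSet.univ
      (fun x _ => (Real.hasDerivAt_exp x).hasDerivWithinAt) Real.exp_injective.injOn,
    Measure.restrict_univ]
  refine integral_congr_ae (ae_of_all _ fun u => ?_)
  have hcpow : ((rexp u : ℝ) : ℂ) ^ (s - 1) = Complex.exp (u * (s - 1)) := by
    rw [Complex.cpow_def_of_ne_zero (by exact_mod_cast (Real.exp_pos u).ne'),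
      ← Complex.ofReal_log (Real.exp_pos u).le, Real.log_exp]
  simp only [abs_of_pos (Real.exp_pos u), hcpow, Complex.real_smul]
  rw [Complex.ofReal_exp, Complex.ofReal_exp, ← Complex.exp_add, ← Complex.exp_add,
    Complex.ofReal_neg, Complex.ofReal_exp]
  ring_nf

lemma differentiable_integral_mul_exp {α : Type*} {_ : MeasurableSpace α} {μ : Measure α}
    {φ ψ : α → ℂ} (hφ : AEStronglyMeasurable φ μ) (hψ : AEStronglyMeasurable ψ μ)
    (hint : ∀ R : ℝ, Integrable (fun x => ‖φ x‖ * rexp (R * ‖ψ x‖)) μ) :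
    Differentiable ℂ fun a : ℂ => ∫ x, φ x * Complex.exp (a * ψ x) ∂μ := by
  intro a₀
  have hmeas (a : ℂ) : AEStronglyMeasurable (fun x => φ x * Complex.exp (a * ψ x)) μ :=
    hφ.mul (Complex.continuous_exp.comp_aestronglyMeasurable (hψ.const_mul a))
  have hnorm (a : ℂ) (x : α) : ‖φ x * Complex.exp (a * ψ x)‖ ≤ ‖φ x‖ * rexp (‖a‖ * ‖ψ x‖) := by
    rw [norm_mul, ← norm_mul a]
    gcongr
    exact Complex.norm_exp_le_exp_norm _
  refine (hasDerivAt_integral_of_dominated_loc_of_deriv_le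
    (F' := fun a x => φ x * Complex.exp (a * ψ x) * ψ x) (Metric.ball_mem_nhds a₀ one_pos)
    (Eventually.of_forall hmeas) ((hint ‖a₀‖).mono' (hmeas a₀) (ae_of_all _ (hnorm a₀)))
    ((hmeas a₀).mul hψ) (ae_of_all _ fun x a ha => ?_) (hint (‖a₀‖ + 1 + 1))
    (ae_of_all _ fun x a _ => ?_)).2.differentiableAt
  · have ha' : ‖a‖ ≤ ‖a₀‖ + 1 := (norm_lt_of_mem_ball ha).le
    calc ‖φ x * Complex.exp (a * ψ x) * ψ x‖
        ≤ ‖φ x‖ * rexp (‖a‖ * ‖ψ x‖) * rexp ‖ψ x‖ := by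
          rw [norm_mul]
          gcongr
          · exact hnorm a x
          · linarith [Real.add_one_le_exp ‖ψ x‖]
      _ = ‖φ x‖ * rexp ((‖a‖ + 1) * ‖ψ x‖) := by rw [mul_assoc, ← Real.exp_add]; ring_nf
      _ ≤ ‖φ x‖ * rexp ((‖a₀‖ + 1 + 1) * ‖ψ x‖) := by gcongr
  · simpa only [mul_assoc, one_mul, id] using
      (((hasDerivAt_id a).mul_const (ψ x)).cexp.const_mul (φ x))

lemma integral_horizontal_line_eq {E : Type*} [NormedAddCommGroup E] [NormedSpace ℂ E]
    {f : ℂ → E} (hf : Differentiable ℂ f) {v₁ v₂ : ℝ}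
    (h₁ : Integrable fun u : ℝ => f (u + v₁ * I)) (h₂ : Integrable fun u : ℝ => f (u + v₂ * I))
    (hbot : Tendsto (fun u : ℝ => ∫ v in v₁..v₂, f (u + v * I)) atBot (𝓝 0))
    (htop : Tendsto (fun u : ℝ => ∫ v in v₁..v₂, f (u + v * I)) atTop (𝓝 0)) :
    ∫ u : ℝ, f (u + v₁ * I) = ∫ u : ℝ, f (u + v₂ * I) := by
  have cauchy (R : ℝ) := Complex.integral_boundary_rect_eq_zero_of_differentiableOn f
    (⟨-R, v₁⟩ : ℂ) ⟨R, v₂⟩ hf.differentiableOn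
  have l₁ := intervalIntegral_tendsto_integral h₁ tendsto_neg_atTop_atBot tendsto_id
  have l₂ := intervalIntegral_tendsto_integral h₂ tendsto_neg_atTop_atBot tendsto_id
  have limit := ((l₁.sub l₂).add (htop.const_smul I)).sub
    ((hbot.comp tendsto_neg_atTop_atBot).const_smul I)
  have := tendsto_nhds_unique limit (tendsto_const_nhds.congr fun R => (cauchy R).symm)
  simpa only [smul_zero, add_zero, sub_zero, sub_eq_zero] using this

end IntegralLemmas

section HankelIntegral

/-- The closed half strip `c ≤ re w`, `|im w| ≤ θ`. -/
def halfStrip (θ c : ℝ) : Set ℂ := {w | c ≤ w.re ∧ |w.im| ≤ θ}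

/-- The integral of `f` along the boundary of `halfStrip θ c`, coming in from `+∞` on the lower ray
and returning to `+∞` on the upper one. Under `s = exp w` this boundary is Hankel's contour: the
rays `arg s = ±θ` outside the disc of radius `exp c`, joined by an arc of its circle. -/
noncomputable def hankelIntegral (θ c : ℝ) (f : ℂ → ℂ) : ℂ :=
  (∫ u in Ioi c, f (u + θ * I)) - (∫ u in Ioi c, f (u + ((-θ : ℝ) : ℂ) * I))
    + I * ∫ v in (-θ)..θ, f (c + v * I)

/-- Absolute convergence of `hankelIntegral θ c f`. -/
structure HankelIntegrable (θ c : ℝ) (f : ℂ → ℂ) : Prop where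
  ray : ∀ v : ℝ, |v| = θ → IntegrableOn (fun u : ℝ => f (u + v * I)) (Ioi c)
  arc : IntervalIntegrable (fun v : ℝ => f (c + v * I)) volume (-θ) θ

variable {θ c D : ℝ} {f g : ℂ → ℂ}

lemma add_mul_I_mem_halfStrip {u v : ℝ} : (u + v * I : ℂ) ∈ halfStrip θ c ↔ c ≤ u ∧ |v| ≤ θ := by
  simp [halfStrip]

lemma arc_mem_halfStrip (hθ : 0 ≤ θ) {v : ℝ} (hv : v ∈ uIcc (-θ) θ) :
    (c + v * I : ℂ) ∈ halfStrip θ c := by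
  rw [uIcc_of_le (by linarith)] at hv
  exact add_mul_I_mem_halfStrip.2 ⟨le_rfl, abs_le.2 hv⟩

lemma ae_ray_mem_halfStrip {v : ℝ} (hv : |v| ≤ θ) :
    ∀ᵐ u : ℝ ∂volume.restrict (Ioi c), (u + v * I : ℂ) ∈ halfStrip θ c := by
  filter_upwards [ae_restrict_mem measurableSet_Ioi] with u hu
  exact add_mul_I_mem_halfStrip.2 ⟨le_of_lt hu, hv⟩

lemma HankelIntegrable.mono (hg : HankelIntegrable θ c g) (hθ : 0 ≤ θ)
    (hf : ContinuousOn f (halfStrip θ c)) (hfg : ∀ w ∈ halfStrip θ c, ‖f w‖ ≤ D * ‖g w‖) :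
    HankelIntegrable θ c f where
  ray v hv := by
    refine ((hg.ray v hv).norm.const_mul D).mono' ?_
      ((ae_ray_mem_halfStrip hv.le).mono fun u hu => hfg _ hu)
    refine (hf.comp (f := fun u : ℝ => (u + v * I : ℂ)) (by fun_prop) fun u hu => ?_)
      |>.aestronglyMeasurable measurableSet_Ioi
    exact add_mul_I_mem_halfStrip.2 ⟨le_of_lt hu, hv.le⟩
  arc :=
    (hf.comp (f := fun v : ℝ => (c + v * I : ℂ)) (by fun_prop) fun v hv =>
      arc_mem_halfStrip hθ hv).intervalIntegrable

lemma HankelIntegrable.exists_norm_hankelIntegral_le (hg : HankelIntegrable θ c g) (hθ : 0 ≤ θ) :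
    ∃ K : ℝ, ∀ (D : ℝ) (f : ℂ → ℂ), (∀ w ∈ halfStrip θ c, ‖f w‖ ≤ D * ‖g w‖) →
      ‖hankelIntegral θ c f‖ ≤ D * K := by
  refine ⟨(∫ u in Ioi c, ‖g (u + θ * I)‖) + (∫ u in Ioi c, ‖g (u + ((-θ : ℝ) : ℂ) * I)‖) +
    ∫ v in (-θ)..θ, ‖g (c + v * I)‖, fun D f hfg => ?_⟩
  have hray (v : ℝ) (hv : |v| = θ) :
      ‖∫ u in Ioi c, f (u + v * I)‖ ≤ D * ∫ u in Ioi c, ‖g (u + v * I)‖ := by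
    rw [← integral_const_mul]
    exact norm_integral_le_of_norm_le ((hg.ray v hv).norm.const_mul D)
      ((ae_ray_mem_halfStrip hv.le).mono fun u hu => hfg _ hu)
  have harc : ‖I * ∫ v in (-θ)..θ, f (c + v * I)‖ ≤ D * ∫ v in (-θ)..θ, ‖g (c + v * I)‖ := by
    rw [norm_mul, Complex.norm_I, one_mul, ← intervalIntegral.integral_const_mul]
    refine intervalIntegral.norm_integral_le_of_norm_le (by linarith) (ae_of_all _ fun v hv => ?_)
      (hg.arc.norm.const_mul D)
    exact hfg _ (arc_mem_halfStrip hθ (Icc_subset_uIcc (Ioc_subset_Icc_self hv)))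
  rw [mul_add, mul_add]
  exact norm_add_le_of_le (norm_sub_le_of_le (hray θ (abs_of_nonneg hθ))
    (hray (-θ) (by rw [abs_neg, abs_of_nonneg hθ]))) harc

lemma hankelIntegral_const_mul (θ c : ℝ) (x : ℂ) (f : ℂ → ℂ) :
    hankelIntegral θ c (fun w => x * f w) = x * hankelIntegral θ c f := by
  simp only [hankelIntegral, integral_const_mul, intervalIntegral.integral_const_mul]
  ring

lemma hasSum_hankelIntegral {F : ℕ → ℂ → ℂ} {bound : ℕ → ℝ} (hθ : 0 ≤ θ)
    (hF : ∀ j, Continuous (F j)) (hg : HankelIntegrable θ c g) (hbound : Summable bound)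
    (hFg : ∀ j, ∀ w ∈ halfStrip θ c, ‖F j w‖ ≤ bound j * ‖g w‖)
    (hsum : ∀ w ∈ halfStrip θ c, HasSum (F · w) (f w)) :
    HasSum (fun j => hankelIntegral θ c (F j)) (hankelIntegral θ c f) := by
  have hray (v : ℝ) (hv : |v| = θ) : HasSum (fun j => ∫ u in Ioi c, F j (u + v * I))
      (∫ u in Ioi c, f (u + v * I)) := by
    refine hasSum_integral_of_dominated_convergence (fun j u => bound j * ‖g (u + v * I)‖)
      (fun j => Continuous.aestronglyMeasurable (by fun_prop))
      (fun j => (ae_ray_mem_halfStrip hv.le).mono fun u hu => hFg j _ hu)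
      (ae_of_all _ fun u => hbound.mul_right _) ?_
      ((ae_ray_mem_halfStrip hv.le).mono fun u hu => hsum _ hu)
    simpa only [tsum_mul_right] using (hg.ray v hv).norm.const_mul (∑' j, bound j)
  have harc : HasSum (fun j => ∫ v in (-θ)..θ, F j (c + v * I))
      (∫ v in (-θ)..θ, f (c + v * I)) := by
    refine intervalIntegral.hasSum_integral_of_dominated_convergence
      (fun j v => bound j * ‖g (c + v * I)‖)
      (fun j => Continuous.aestronglyMeasurable (by fun_prop))
      (fun j => ae_of_all _ fun v hv => hFg j _ (arc_mem_halfStrip hθ (uIoc_subset_uIcc hv)))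
      (ae_of_all _ fun v _ => hbound.mul_right _) ?_
      (ae_of_all _ fun v hv => hsum _ (arc_mem_halfStrip hθ (uIoc_subset_uIcc hv)))
    simpa only [tsum_mul_right] using hg.arc.norm.const_mul (∑' j, bound j)
  exact ((hray θ (abs_of_nonneg hθ)).sub (hray (-θ) (by rw [abs_neg, abs_of_nonneg hθ]))).add
    (harc.mul_left I)

lemma hankelIntegral_eq_of_le (hθ : 0 ≤ θ) {c' : ℝ} (hc : c ≤ c')
    (hf : DifferentiableOn ℂ f (halfStrip θ c)) (hfi : HankelIntegrable θ c f) :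
    hankelIntegral θ c f = hankelIntegral θ c' f := by
  have cauchy := Complex.integral_boundary_rect_eq_zero_of_differentiableOn f
    (⟨c, -θ⟩ : ℂ) ⟨c', θ⟩ (hf.mono fun w hw => by
      rw [Complex.mem_reProdIm, uIcc_of_le hc, uIcc_of_le (by linarith : -θ ≤ θ)] at hw
      exact ⟨hw.1.1, abs_le.2 hw.2⟩)
  have split (v : ℝ) (hv : |v| = θ) : ∫ u in Ioi c, f (u + v * I) =
      (∫ u in c..c', f (u + v * I)) + ∫ u in Ioi c', f (u + v * I) :=
    (intervalIntegral.integral_interval_add_Ioi (hfi.ray v hv)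
      ((hfi.ray v hv).mono_set (Ioi_subset_Ioi hc))).symm
  rw [hankelIntegral, hankelIntegral, split θ (abs_of_nonneg hθ),
    split (-θ) (by rw [abs_neg, abs_of_nonneg hθ])]
  simp only [smul_eq_mul] at cauchy
  linear_combination -cauchy

end HankelIntegral

section HankelKernel

/-- The integrand `e^s s^{-a} ds` of Hankel's formula for `1 / Γ(a)` in the coordinate
`s = exp w`, in which it is an entire function of `w` without any choice of branch. -/
noncomputable def hankelKernel (a w : ℂ) : ℂ := Complex.exp (Complex.exp w + (1 - a) * w)

variable {a : ℂ} {θ c : ℝ}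

lemma differentiable_hankelKernel (a : ℂ) : Differentiable ℂ (hankelKernel a) := by
  unfold hankelKernel
  fun_prop

@[fun_prop]
lemma continuous_hankelKernel (a : ℂ) : Continuous (hankelKernel a) :=
  (differentiable_hankelKernel a).continuous

lemma norm_hankelKernel (a : ℂ) (u v : ℝ) : ‖hankelKernel a (u + v * I)‖ =
    rexp (Real.cos v * rexp u + (1 - a.re) * u) * rexp (a.im * v) := by
  have hre : (Complex.exp (u + v * I) + (1 - a) * (u + v * I)).re =
      Real.cos v * rexp u + (1 - a.re) * u + a.im * v := by
    simp [Complex.exp_re]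
    ring
  rw [hankelKernel, Complex.norm_exp, ← Real.exp_add, hre]

lemma hankelKernel_eq_mul_exp (a w : ℂ) :
    hankelKernel a w = hankelKernel 0 w * Complex.exp (a * -w) := by
  rw [hankelKernel, hankelKernel, ← Complex.exp_add]
  ring_nf

lemma integrableOn_hankelKernel (a : ℂ) {v : ℝ} (hv : Real.cos v < 0) (c : ℝ) :
    IntegrableOn (fun u : ℝ => hankelKernel a (u + v * I)) (Ioi c) :=
  ((integrableOn_exp_mul_exp_add_mul_Ioi hv (1 - a.re) c).mul_const (rexp (a.im * v))).mono'
    (by fun_prop) (ae_of_all _ fun u => (norm_hankelKernel a u v).le)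

lemma integrable_hankelKernel (ha : a.re < 1) {v : ℝ} (hv : Real.cos v < 0) :
    Integrable fun u : ℝ => hankelKernel a (u + v * I) :=
  ((integrable_exp_mul_exp_add_mul hv (sub_pos.2 ha)).mul_const (rexp (a.im * v))).mono'
    (by fun_prop) (ae_of_all _ fun u => (norm_hankelKernel a u v).le)

lemma hankelIntegrable_hankelKernel (a : ℂ) (hθ : Real.cos θ < 0) (c : ℝ) :
    HankelIntegrable θ c (hankelKernel a) where
  ray v hv := integrableOn_hankelKernel a (by rwa [← Real.cos_abs, hv]) c
  arc := Continuous.intervalIntegrable (by fun_prop) _ _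

lemma norm_intervalIntegral_hankelKernel_le (a : ℂ) (u : ℝ) {k v₁ v₂ : ℝ}
    (hk : ∀ v ∈ uIcc v₁ v₂, Real.cos v ≤ k) :
    ‖∫ v in v₁..v₂, hankelKernel a (u + v * I)‖ ≤
      rexp (k * rexp u + (1 - a.re) * u) * (rexp (|a.im| * max |v₁| |v₂|) * |v₂ - v₁|) := by
  rw [← mul_assoc]
  refine intervalIntegral.norm_integral_le_of_norm_le_const fun v hv => ?_
  have hv' := uIoc_subset_uIcc hv
  have him : a.im * v ≤ |a.im| * max |v₁| |v₂| := by
    refine (le_abs_self _).trans ?_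
    rw [abs_mul]
    gcongr
    rcases mem_uIcc.1 hv' with h | h
    · exact abs_le_max_abs_abs h.1 h.2
    · exact (abs_le_max_abs_abs h.1 h.2).trans_eq (max_comm _ _)
  rw [norm_hankelKernel]
  gcongr
  exact hk v hv'

lemma tendsto_intervalIntegral_hankelKernel_atBot (ha : a.re < 1) (v₁ v₂ : ℝ) :
    Tendsto (fun u : ℝ => ∫ v in v₁..v₂, hankelKernel a (u + v * I)) atBot (𝓝 0) := by
  refine squeeze_zero_norm (fun u => norm_intervalIntegral_hankelKernel_le a u
    fun v _ => Real.cos_le_one v) ?_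
  simpa only [zero_mul] using
    (tendsto_exp_mul_exp_add_mul_atBot 1 (sub_pos.2 ha)).mul_const _

lemma tendsto_intervalIntegral_hankelKernel_atTop (a : ℂ) {k v₁ v₂ : ℝ} (hk₀ : k < 0)
    (hk : ∀ v ∈ uIcc v₁ v₂, Real.cos v ≤ k) :
    Tendsto (fun u : ℝ => ∫ v in v₁..v₂, hankelKernel a (u + v * I)) atTop (𝓝 0) := by
  refine squeeze_zero_norm (fun u => norm_intervalIntegral_hankelKernel_le a u hk) ?_
  simpa only [zero_mul] using
    (tendsto_exp_mul_exp_add_mul_atTop hk₀ (1 - a.re)).mul_const _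

lemma integral_hankelKernel_of_exp_eq_neg_one (ha : a.re < 1) {p : ℝ}
    (hp : Complex.exp (p * I) = -1) :
    ∫ u : ℝ, hankelKernel a (u + p * I) =
      Complex.exp ((1 - a) * (p * I)) * Complex.Gamma (1 - a) := by
  rw [← integral_exp_neg_exp_add_mul (by simpa using ha), ← integral_const_mul]
  refine integral_congr_ae (ae_of_all _ fun u => ?_)
  simp only [hankelKernel]
  rw [Complex.exp_add u, hp, ← Complex.exp_add]
  ring_nf

lemma cos_neg_of_mem_Ioc (hθ : θ ∈ Ioc (π / 2) π) : Real.cos θ < 0 :=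
  Real.cos_neg_of_pi_div_two_lt_of_lt hθ.1 (by linarith [hθ.2, Real.pi_pos])

lemma cos_eq_neg_cos_sub {p : ℝ} (hp : Complex.exp (p * I) = -1) (v : ℝ) :
    Real.cos v = -Real.cos (v - p) := by
  have hcos : Real.cos p = -1 := by simpa using congrArg Complex.re hp
  have hsin : Real.sin p = 0 := by simpa using congrArg Complex.im hp
  rw [Real.cos_sub, hcos, hsin]
  ring

lemma integral_hankelKernel (ha : a.re < 1) {p v : ℝ} (hp : Complex.exp (p * I) = -1)
    (hv : |v - p| < π / 2) :
    ∫ u : ℝ, hankelKernel a (u + v * I) =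
      Complex.exp ((1 - a) * (p * I)) * Complex.Gamma (1 - a) := by
  have hcos (x : ℝ) (hx : x ∈ uIcc v p) : Real.cos x ≤ Real.cos v := by
    rw [cos_eq_neg_cos_sub hp x, cos_eq_neg_cos_sub hp v, neg_le_neg_iff, ← Real.cos_abs (v - p),
      ← Real.cos_abs (x - p)]
    refine Real.cos_le_cos_of_nonneg_of_le_pi (abs_nonneg _) (by linarith [Real.pi_pos]) ?_
    rw [abs_sub_comm x, abs_sub_comm v]
    exact abs_sub_right_of_mem_uIcc hx
  have hv₀ : Real.cos v < 0 := by
    rw [cos_eq_neg_cos_sub hp v, neg_lt_zero]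
    exact Real.cos_pos_of_mem_Ioo (abs_lt.1 hv)
  rw [← integral_hankelKernel_of_exp_eq_neg_one ha hp]
  exact integral_horizontal_line_eq (differentiable_hankelKernel a)
    (integrable_hankelKernel ha hv₀)
    (integrable_hankelKernel ha ((hcos p right_mem_uIcc).trans_lt hv₀))
    (tendsto_intervalIntegral_hankelKernel_atBot ha v p)
    (tendsto_intervalIntegral_hankelKernel_atTop a hv₀ hcos)

lemma tendsto_hankelIntegral_hankelKernel_atBot (ha : a.re < 1) (hθ : Real.cos θ < 0) :
    Tendsto (fun c => hankelIntegral θ c (hankelKernel a)) atBot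
      (𝓝 ((∫ u : ℝ, hankelKernel a (u + θ * I)) -
        ∫ u : ℝ, hankelKernel a (u + ((-θ : ℝ) : ℂ) * I))) := by
  have hray (v : ℝ) (hv : Real.cos v < 0) :
      Tendsto (fun c : ℝ => ∫ u in Ioi c, hankelKernel a (u + v * I)) atBot
        (𝓝 (∫ u : ℝ, hankelKernel a (u + v * I))) :=
    (aecover_Ioi tendsto_id).integral_tendsto_of_countably_generated (integrable_hankelKernel ha hv)
  simpa only [hankelIntegral, mul_zero, add_zero] using
    ((hray θ hθ).sub (hray (-θ) (by rwa [Real.cos_neg]))).add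
      ((tendsto_intervalIntegral_hankelKernel_atBot ha (-θ) θ).const_mul I)

lemma sin_pi_mul_Gamma_one_sub (ha : a.re < 1) :
    Complex.sin (π * a) * Complex.Gamma (1 - a) = π * (Complex.Gamma a)⁻¹ := by
  have reflection := Complex.Gamma_mul_Gamma_one_sub a
  have hΓ : Complex.Gamma (1 - a) ≠ 0 := Complex.Gamma_ne_zero_of_re_pos (by simpa using ha)
  by_cases hsin : Complex.sin (π * a) = 0
  · have : Complex.Gamma a = 0 := by simpa [hsin, hΓ] using reflection
    simp [hsin, this]
  · rw [eq_div_iff hsin] at reflection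
    have hΓa : Complex.Gamma a ≠ 0 := by
      intro h
      rw [h, zero_mul, zero_mul] at reflection
      exact Complex.ofReal_ne_zero.2 Real.pi_ne_zero reflection.symm
    rw [eq_mul_inv_iff_mul_eq₀ hΓa]
    linear_combination reflection

lemma hankelIntegral_hankelKernel_of_re_lt_one (ha : a.re < 1) (hθ : θ ∈ Ioc (π / 2) π) (c : ℝ) :
    hankelIntegral θ c (hankelKernel a) = 2 * π * I * (Complex.Gamma a)⁻¹ := by
  have hcos := cos_neg_of_mem_Ioc hθ
  have hconst : ∀ᶠ c' in atBot,
      hankelIntegral θ c' (hankelKernel a) = hankelIntegral θ c (hankelKernel a) := by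
    filter_upwards [eventually_le_atBot c] with c' hc'
    exact hankelIntegral_eq_of_le (by linarith [hθ.1, Real.pi_pos]) hc'
      (differentiable_hankelKernel a).differentiableOn (hankelIntegrable_hankelKernel a hcos c')
  have hsin : Complex.exp ((1 - a) * (π * I)) - Complex.exp ((1 - a) * ((-π : ℝ) * I)) =
      2 * I * Complex.sin (π * a) := by
    rw [← Complex.sin_pi_sub, Complex.sin]
    push_cast
    ring_nf
    simp only [Complex.I_sq]
    ring
  rw [tendsto_nhds_unique (tendsto_const_nhds.congr' (hconst.mono fun _ => Eq.symm))
      (tendsto_hankelIntegral_hankelKernel_atBot ha hcos),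
    integral_hankelKernel ha (p := π) Complex.exp_pi_mul_I
      (abs_lt.2 ⟨by linarith [hθ.1], by linarith [hθ.2, Real.pi_pos]⟩),
    integral_hankelKernel ha (p := -π) (by simp [Complex.exp_neg])
      (abs_lt.2 ⟨by linarith [hθ.2, Real.pi_pos], by linarith [hθ.1]⟩), ← sub_mul, hsin]
  linear_combination 2 * I * sin_pi_mul_Gamma_one_sub ha

-- On a horizontal ray `exp (R ‖w‖)` is at most a constant times `exp (|R| u)`, which amounts to
-- replacing `a` by `a - |R|`.
lemma integrableOn_norm_hankelKernel_mul_exp_norm (a : ℂ) {v : ℝ} (hv : Real.cos v < 0)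
    (c R : ℝ) :
    IntegrableOn (fun u : ℝ => ‖hankelKernel a (u + v * I)‖ * rexp (R * ‖-(u + v * I : ℂ)‖))
      (Ioi c) := by
  refine ((integrableOn_hankelKernel (a - |R|) hv c).norm.mul_const
    (rexp (|R| * (2 * |c| + |v|)))).mono' (by fun_prop) ?_
  filter_upwards [ae_restrict_mem measurableSet_Ioi] with u hu
  have hnorm : ‖-(u + v * I : ℂ)‖ ≤ u + (2 * |c| + |v|) := by
    have hadd : ‖(u + v * I : ℂ)‖ ≤ |u| + |v| := by simpa using norm_add_le (u : ℂ) (v * I)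
    have habs : |u| ≤ u + 2 * |c| :=
      abs_le.2 ⟨by linarith [neg_abs_le c, mem_Ioi.1 hu], by linarith [abs_nonneg c]⟩
    rw [norm_neg]
    linarith
  have hexp : R * ‖-(u + v * I : ℂ)‖ ≤ |R| * (u + (2 * |c| + |v|)) := by
    gcongr
    exact le_abs_self R
  rw [norm_hankelKernel, norm_hankelKernel, Real.norm_of_nonneg (by positivity)]
  simp only [← Real.exp_add, Complex.sub_re, Complex.sub_im, Complex.ofReal_re, Complex.ofReal_im,
    Real.exp_le_exp]
  linarith

lemma differentiable_hankelIntegral_hankelKernel (hθ : Real.cos θ < 0) (c : ℝ) :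
    Differentiable ℂ fun a => hankelIntegral θ c (hankelKernel a) := by
  have hray (v : ℝ) (hv : Real.cos v < 0) :
      Differentiable ℂ fun a => ∫ u in Ioi c, hankelKernel a (u + v * I) := by
    simpa only [← hankelKernel_eq_mul_exp] using
      differentiable_integral_mul_exp (φ := fun u : ℝ => hankelKernel 0 (u + v * I))
        (ψ := fun u : ℝ => -(u + v * I)) (by fun_prop) (by fun_prop)
        (integrableOn_norm_hankelKernel_mul_exp_norm 0 hv c)
  have harc (x y : ℝ) : Differentiable ℂ fun a => ∫ v in Ioc x y, hankelKernel a (c + v * I) := by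
    simpa only [← hankelKernel_eq_mul_exp] using
      differentiable_integral_mul_exp (φ := fun v : ℝ => hankelKernel 0 (c + v * I))
        (ψ := fun v : ℝ => -(c + v * I)) (by fun_prop) (by fun_prop)
        fun R => Continuous.integrableOn_Ioc (by fun_prop)
  exact ((hray θ hθ).sub (hray (-θ) (by rwa [Real.cos_neg]))).add
    (((harc (-θ) θ).sub (harc θ (-θ))).const_mul I)

theorem hankelIntegral_hankelKernel (a : ℂ) (hθ : θ ∈ Ioc (π / 2) π) (c : ℝ) :
    hankelIntegral θ c (hankelKernel a) = 2 * π * I * (Complex.Gamma a)⁻¹ := by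
  have hcos := cos_neg_of_mem_Ioc hθ
  have hleft := Complex.analyticOnNhd_univ_iff_differentiable.2
    (differentiable_hankelIntegral_hankelKernel hcos c)
  have hright := Complex.analyticOnNhd_univ_iff_differentiable.2
    (Complex.differentiable_one_div_Gamma.const_mul (2 * π * I))
  refine congrFun (hleft.eq_of_eventuallyEq hright (z₀ := 0) ?_) a
  filter_upwards [(isOpen_lt Complex.continuous_re continuous_const).mem_nhds
    (by simp : (0 : ℂ) ∈ {a : ℂ | a.re < 1})] with a ha
  exact hankelIntegral_hankelKernel_of_re_lt_one ha hθ c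

end HankelKernel

section MittagLeffler

/-- The generating kernel `∑ zʲ hankelKernel (μ j + ν) w`, summed as a geometric series. -/
noncomputable def mittagLefflerKernel (μ ν : ℝ) (z w : ℂ) : ℂ :=
  hankelKernel ((ν - μ : ℝ) : ℂ) w / (Complex.exp (μ * w) - z)

variable {μ ν θ c ε φ : ℝ} {z w y : ℂ}

lemma pow_mul_hankelKernel (μ ν : ℝ) (z w : ℂ) (j : ℕ) :
    z ^ j * hankelKernel ((μ * j + ν : ℝ) : ℂ) w =
      hankelKernel ν w * (z * Complex.exp (-(μ * w))) ^ j := by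
  rw [mul_pow, ← Complex.exp_nat_mul, mul_left_comm, hankelKernel, hankelKernel, ← Complex.exp_add]
  congr 2
  push_cast
  ring

lemma norm_mul_exp_neg (μ : ℝ) (z w : ℂ) :
    ‖z * Complex.exp (-(μ * w))‖ = ‖z‖ * rexp (-(μ * w.re)) := by
  rw [norm_mul, Complex.norm_exp, Complex.neg_re, Complex.re_ofReal_mul]

lemma hasSum_mittagLefflerKernel (ν : ℝ) (hz : ‖z‖ < rexp (μ * w.re)) :
    HasSum (fun j : ℕ => z ^ j * hankelKernel ((μ * j + ν : ℝ) : ℂ) w)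
      (mittagLefflerKernel μ ν z w) := by
  have hratio : ‖z * Complex.exp (-(μ * w))‖ < 1 := by
    rwa [norm_mul_exp_neg, Real.exp_neg, ← div_eq_mul_inv, div_lt_one (Real.exp_pos _)]
  have hsplit : hankelKernel ((ν - μ : ℝ) : ℂ) w = hankelKernel ν w * Complex.exp (μ * w) := by
    rw [hankelKernel, hankelKernel, ← Complex.exp_add]
    push_cast
    ring_nf
  have hden : Complex.exp (μ * w) - z =
      (1 - z * Complex.exp (-(μ * w))) * Complex.exp (μ * w) := by
    rw [sub_mul, mul_assoc, ← Complex.exp_add, neg_add_cancel, Complex.exp_zero, one_mul, mul_one]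
  simp only [pow_mul_hankelKernel]
  rw [mittagLefflerKernel, hsplit, hden, mul_div_mul_right _ _ (Complex.exp_ne_zero _),
    div_eq_mul_inv]
  exact (hasSum_geometric_of_norm_lt_one hratio).mul_left _

lemma norm_pow_mul_hankelKernel_le (hμ : 0 ≤ μ) (ν : ℝ) (z : ℂ) (j : ℕ)
    (hw : w ∈ halfStrip θ c) :
    ‖z ^ j * hankelKernel ((μ * j + ν : ℝ) : ℂ) w‖ ≤
      (‖z‖ * rexp (-(μ * c))) ^ j * ‖hankelKernel ν w‖ := by
  rw [pow_mul_hankelKernel, norm_mul, norm_pow, norm_mul_exp_neg, mul_comm]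
  have := hw.1
  gcongr

lemma hasSum_mittagLeffler (hμ : 0 ≤ μ) (ν : ℝ) (hθ : θ ∈ Ioc (π / 2) π)
    (hz : ‖z‖ < rexp (μ * c)) :
    HasSum (fun j : ℕ => z ^ j / (Real.Gamma (μ * j + ν) : ℂ))
      ((2 * π * I)⁻¹ * hankelIntegral θ c (mittagLefflerKernel μ ν z)) := by
  have hcos := cos_neg_of_mem_Ioc hθ
  have hratio : ‖z‖ * rexp (-(μ * c)) < 1 := by
    rwa [Real.exp_neg, ← div_eq_mul_inv, div_lt_one (Real.exp_pos _)]
  refine ((hasSum_hankelIntegral (by linarith [hθ.1, Real.pi_pos]) (fun j => by fun_prop)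
    (hankelIntegrable_hankelKernel ν hcos c)
    (summable_geometric_of_lt_one (by positivity) hratio)
    (fun j w hw => norm_pow_mul_hankelKernel_le hμ ν z j hw)
    fun w hw => hasSum_mittagLefflerKernel ν (hz.trans_le ?_)).mul_left _).congr_fun fun j => ?_
  · have := hw.1
    gcongr
  · rw [hankelIntegral_const_mul, hankelIntegral_hankelKernel _ hθ, Complex.Gamma_ofReal,
      mul_left_comm, inv_mul_cancel_left₀ Complex.two_pi_I_ne_zero, div_eq_mul_inv]

lemma exists_ge_lt_exp_mul (hμ : 0 < μ) (r c : ℝ) : ∃ c' ≥ c, r < rexp (μ * c') :=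
  ((eventually_ge_atTop c).and
    ((Real.tendsto_exp_atTop.comp (tendsto_id.const_mul_atTop hμ)).eventually_gt_atTop r)).exists

lemma summable_mittagLeffler (hμ : 0 < μ) (ν : ℝ) (z : ℂ) :
    Summable fun j : ℕ => z ^ j / (Real.Gamma (μ * j + ν) : ℂ) := by
  obtain ⟨c, -, hc⟩ := exists_ge_lt_exp_mul hμ ‖z‖ 0
  exact (hasSum_mittagLeffler hμ.le ν ⟨by linarith [Real.pi_pos], le_rfl⟩ hc).summable

lemma continuous_mittagLeffler (hμ : 0 < μ) (ν : ℝ) : Continuous (mittagLeffler μ ν) := by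
  refine continuous_iff_continuousAt.2 fun z₀ => ?_
  have hsum := (summable_mittagLeffler hμ ν ((‖z₀‖ + 1 : ℝ) : ℂ)).norm
  refine (continuousOn_tsum (s := Metric.ball z₀ 1) (fun j => by fun_prop) hsum fun j z hz =>
    ?_).continuousAt (Metric.ball_mem_nhds z₀ one_pos)
  rw [norm_div, norm_div, norm_pow, norm_pow, Complex.norm_of_nonneg (r := ‖z₀‖ + 1)
    (by positivity)]
  gcongr
  exact (norm_lt_of_mem_ball hz).le

lemma mittagLeffler_eq_add_mul (hμ : 0 < μ) (ν : ℝ) (z : ℂ) :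
    mittagLeffler μ ν z = (Real.Gamma ν : ℂ)⁻¹ + z * mittagLeffler μ (ν + μ) z := by
  rw [mittagLeffler, (summable_mittagLeffler hμ ν z).tsum_eq_zero_add, mittagLeffler,
    ← tsum_mul_left]
  congr 1
  · simp
  · refine tsum_congr fun j => ?_
    rw [pow_succ', mul_div_assoc]
    push_cast
    ring_nf

lemma norm_mittagLefflerKernel_le (μ ν : ℝ) (hε : 0 < ε) (hw : ε ≤ ‖Complex.exp (μ * w) - z‖) :
    ‖mittagLefflerKernel μ ν z w‖ ≤ ε⁻¹ * ‖hankelKernel ((ν - μ : ℝ) : ℂ) w‖ := by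
  rw [mittagLefflerKernel, norm_div, div_eq_inv_mul]
  gcongr

lemma mittagLeffler_eq_hankelIntegral (hμ : 0 < μ) (ν : ℝ) (hθ : θ ∈ Ioc (π / 2) π) (hε : 0 < ε)
    (hz : ∀ w ∈ halfStrip θ c, ε ≤ ‖Complex.exp (μ * w) - z‖) :
    mittagLeffler μ ν z = (2 * π * I)⁻¹ * hankelIntegral θ c (mittagLefflerKernel μ ν z) := by
  have hcos := cos_neg_of_mem_Ioc hθ
  have hθ₀ : 0 ≤ θ := by linarith [hθ.1, Real.pi_pos]
  have hdiff : DifferentiableOn ℂ (mittagLefflerKernel μ ν z) (halfStrip θ c) :=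
    (differentiable_hankelKernel _).differentiableOn.div (by fun_prop) fun w hw =>
      norm_pos_iff.1 (hε.trans_le (hz w hw))
  obtain ⟨c', hc', hzc'⟩ := exists_ge_lt_exp_mul hμ ‖z‖ c
  rw [hankelIntegral_eq_of_le hθ₀ hc' hdiff ((hankelIntegrable_hankelKernel _ hcos c).mono hθ₀
    hdiff.continuousOn fun w hw => norm_mittagLefflerKernel_le μ ν hε (hz w hw))]
  exact (hasSum_mittagLeffler hμ.le ν hθ hzc').tsum_eq

lemma exists_norm_mittagLeffler_le (hμ : 0 < μ) (ν : ℝ) (hθ : θ ∈ Ioc (π / 2) π) (c : ℝ) :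
    ∃ C, ∀ z : ℂ, ∀ ε > 0, (∀ w ∈ halfStrip θ c, ε ≤ ‖Complex.exp (μ * w) - z‖) →
      ‖mittagLeffler μ ν z‖ ≤ C / ε := by
  have hcos := cos_neg_of_mem_Ioc hθ
  obtain ⟨K, hK⟩ := (hankelIntegrable_hankelKernel ((ν - μ : ℝ) : ℂ) hcos
    c).exists_norm_hankelIntegral_le (by linarith [hθ.1, Real.pi_pos])
  refine ⟨‖(2 * π * I)⁻¹‖ * K, fun z ε hε hz => ?_⟩
  rw [mittagLeffler_eq_hankelIntegral hμ ν hθ hε hz, norm_mul, mul_div_assoc, div_eq_inv_mul K]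
  gcongr
  exact hK _ _ fun w hw => norm_mittagLefflerKernel_le μ ν hε (hz w hw)

lemma add_mul_cos_half_sub_le_norm (r₁ r₂ α β : ℝ) :
    (r₁ + r₂) * Real.cos ((α - β) / 2) ≤
      ‖(r₁ * Complex.exp (α * I) + r₂ * Complex.exp (β * I) : ℂ)‖ := by
  have hrot : (r₁ * Complex.exp (α * I) + r₂ * Complex.exp (β * I) : ℂ) =
      Complex.exp (((α + β) / 2 : ℝ) * I) * (r₁ * Complex.exp (((α - β) / 2 : ℝ) * I) +
        r₂ * Complex.exp ((-((α - β) / 2) : ℝ) * I)) := by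
    rw [mul_add, mul_left_comm, mul_left_comm _ (r₂ : ℂ), ← Complex.exp_add, ← Complex.exp_add]
    push_cast
    ring_nf
  rw [hrot, norm_mul, Complex.norm_exp_ofReal_mul_I, one_mul]
  refine le_trans (le_of_eq ?_) (Complex.re_le_norm _)
  rw [Complex.add_re, Complex.re_ofReal_mul, Complex.re_ofReal_mul, Complex.exp_ofReal_mul_I_re,
    Complex.exp_ofReal_mul_I_re, Real.cos_neg, add_mul]

lemma norm_mul_cos_le_norm_exp_add (hμ : 0 ≤ μ) (hy : |Complex.arg y| ≤ φ)
    (hφ : μ * θ + φ ≤ π) (hw : w ∈ halfStrip θ c) :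
    ‖y‖ * Real.cos ((μ * θ + φ) / 2) ≤ ‖Complex.exp (μ * w) + y‖ := by
  have hexp : Complex.exp (μ * w) = rexp (μ * w.re) * Complex.exp ((μ * w.im : ℝ) * I) := by
    rw [Complex.ofReal_exp, ← Complex.exp_add]
    conv_lhs => rw [← Complex.re_add_im w]
    push_cast
    ring_nf
  have hangle : |μ * w.im - Complex.arg y| ≤ μ * θ + φ := by
    refine (abs_sub _ _).trans (add_le_add ?_ hy)
    rw [abs_mul, abs_of_nonneg hμ]
    gcongr
    exact hw.2
  have hcos : Real.cos ((μ * θ + φ) / 2) ≤ Real.cos ((μ * w.im - Complex.arg y) / 2) := by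
    rw [← Real.cos_abs ((μ * w.im - Complex.arg y) / 2), abs_div, abs_two]
    exact Real.cos_le_cos_of_nonneg_of_le_pi (by positivity) (by linarith [Real.pi_pos])
      (by linarith)
  have hcos₀ : 0 ≤ Real.cos ((μ * θ + φ) / 2) :=
    Real.cos_nonneg_of_neg_pi_div_two_le_of_le
      (by linarith [(abs_nonneg _).trans hangle, Real.pi_pos]) (by linarith)
  calc ‖y‖ * Real.cos ((μ * θ + φ) / 2)
      ≤ (rexp (μ * w.re) + ‖y‖) * Real.cos ((μ * w.im - Complex.arg y) / 2) := by
        gcongr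
        linarith [Real.exp_pos (μ * w.re)]
    _ ≤ ‖Complex.exp (μ * w) + y‖ := by
        have h := add_mul_cos_half_sub_le_norm (rexp (μ * w.re)) ‖y‖ (μ * w.im) (Complex.arg y)
        rwa [Complex.norm_mul_exp_arg_mul_I, ← hexp] at h

lemma exists_norm_mittagLeffler_neg_le (hμ : 0 < μ) (ν : ℝ) (hφ : φ < π * (1 - μ / 2)) :
    ∃ C, ∀ y : ℂ, y ≠ 0 → |Complex.arg y| ≤ φ → ‖mittagLeffler μ ν (-y)‖ ≤ C / ‖y‖ := by
  obtain ⟨θ, hθ₁, hθ₂⟩ : ∃ θ, π / 2 < θ ∧ θ < min π ((π - φ) / μ) := by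
    refine exists_between (lt_min (by linarith [Real.pi_pos]) ?_)
    rw [lt_div_iff₀ hμ]
    linarith
  have hθπ : θ < π := hθ₂.trans_le (min_le_left _ _)
  have hθφ : θ * μ < π - φ := (lt_div_iff₀ hμ).1 (hθ₂.trans_le (min_le_right _ _))
  obtain ⟨C, hC⟩ := exists_norm_mittagLeffler_le hμ ν ⟨hθ₁, hθπ.le⟩ 0
  refine ⟨C / Real.cos ((μ * θ + φ) / 2), fun y hy harg => ?_⟩
  have hcos : 0 < Real.cos ((μ * θ + φ) / 2) := by
    have := (abs_nonneg _).trans harg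
    refine Real.cos_pos_of_mem_Ioo ⟨?_, by linarith⟩
    have : 0 < μ * θ := mul_pos hμ (by linarith [Real.pi_pos])
    linarith [Real.pi_pos]
  rw [div_div, mul_comm]
  exact hC (-y) _ (mul_pos (norm_pos_iff.2 hy) hcos) fun w hw =>
    (norm_mul_cos_le_norm_exp_add hμ.le harg (by linarith) hw).trans_eq (by rw [sub_neg_eq_add])

lemma exists_norm_mittagLeffler_self_neg_le (hμ : 0 < μ) (hφ : φ < π * (1 - μ / 2)) :
    ∃ C, ∀ y : ℂ, y ≠ 0 → |Complex.arg y| ≤ φ → ‖mittagLeffler μ μ (-y)‖ ≤ C / ‖y‖ ^ 2 := by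
  obtain ⟨C, hC⟩ := exists_norm_mittagLeffler_neg_le hμ 0 hφ
  refine ⟨C, fun y hy harg => ?_⟩
  have h := hC y hy harg
  rw [mittagLeffler_eq_add_mul hμ, Real.Gamma_zero, Complex.ofReal_zero, inv_zero, zero_add,
    zero_add, norm_mul, norm_neg, ← le_div_iff₀' (norm_pos_iff.2 hy), div_div, ← sq] at h
  exact h

lemma isBigO_mittagLeffler_self_neg (hμ : 0 < μ) (hy : y ≠ 0)
    (harg : |Complex.arg y| < π * (1 - μ / 2)) :
    (fun t : ℝ => mittagLeffler μ μ (-(y * t))) =O[atTop] fun t => t ^ (-2 : ℝ) := by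
  obtain ⟨C, hC⟩ := exists_norm_mittagLeffler_self_neg_le hμ harg
  refine .of_bound (C / ‖y‖ ^ 2) ?_
  filter_upwards [eventually_gt_atTop 0] with t ht
  convert hC (y * t) (mul_ne_zero hy (Complex.ofReal_ne_zero.2 ht.ne'))
    (by rw [Complex.arg_mul_real ht]) using 1
  rw [norm_mul, Complex.norm_of_nonneg ht.le, Real.norm_of_nonneg (by positivity),
    Real.rpow_neg ht.le, Real.rpow_two]
  field_simp

end MittagLeffler

/-- BIBO stability of the fractional transfer function `1/(s^q + λ)`:
if `0 < q < 2` and the pole `λ ≠ 0` satisfies `|arg λ| < π (1 - q/2)`, then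
the impulse response `t ↦ t^{q-1} E_{q,q}(-λ t^q)` is integrable on `(0, ∞)`. -/
theorem fractional_mode_bibo (q : ℝ) (hq0 : 0 < q) (hq2 : q < 2)
    (lambda : ℂ) (hl : lambda ≠ 0)
    (harg : |Complex.arg lambda| < π * (1 - q / 2)) :
    IntegrableOn (fun t : ℝ => ((t ^ (q - 1) : ℝ) : ℂ) *
        mittagLeffler q q (-(lambda * (t ^ q : ℝ)))) (Ioi 0) := by
  have hrpow : Continuous fun t : ℝ => t ^ q := Real.continuous_rpow_const hq0.le
  have hcont : Continuous fun t : ℝ => mittagLeffler q q (-(lambda * (t ^ q : ℝ))) :=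
    (continuous_mittagLeffler hq0 q).comp (by fun_prop)
  have hzero : (fun t : ℝ => mittagLeffler q q (-(lambda * (t ^ q : ℝ))))
      =O[𝓝[>] 0] fun t => t ^ (-0 : ℝ) := by
    simpa only [neg_zero, Real.rpow_zero] using hcont.continuousWithinAt.isBigO_one ℝ
  have htop : (fun t : ℝ => mittagLeffler q q (-(lambda * (t ^ q : ℝ))))
      =O[atTop] fun t => t ^ (-(q * 2)) := by
    refine ((isBigO_mittagLeffler_self_neg hq0 hl harg).comp_tendsto
      (tendsto_rpow_atTop hq0)).congr' .rfl ?_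
    filter_upwards [eventually_ge_atTop 0] with t ht
    rw [Function.comp_apply, ← Real.rpow_mul ht, mul_neg]
  have hmellin := mellinConvergent_of_isBigO_rpow (s := (q : ℂ))
    (hcont.locallyIntegrable.locallyIntegrableOn _) htop
    (by rw [Complex.ofReal_re]; linarith) hzero (by simpa)
  refine hmellin.congr_fun (fun t ht => ?_) measurableSet_Ioi
  simp only [smul_eq_mul, Complex.ofReal_cpow (le_of_lt ht), Complex.ofReal_sub, Complex.ofReal_one]
end

section
/- Let A be an n × n complex matrix and let δ be a real number with 0 ≤ δ < π/2. Form the 2n × 2n block matrix A₁ = [[A·cos δ, −A·sin δ], [A·sin δ, A·cos δ]] (equivalently, the Kronecker product of A with the 2 × 2 rotation matrix of angle δ). Then every root of the characteristic polynomial of A₁ has negative real part if and only if every eigenvalue λ of A is nonzero and satisfies |arg λ| > π/2 + δ. -/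
open Real Matrix

/-!
Over `ℂ` the block matrix `[[P, -Q], [Q, P]]` is similar to a block triangular matrix with diagonal
blocks `P + iQ` and `P - iQ`. For `P = A cos δ`, `Q = A sin δ` these blocks are `e^{iδ} A` and
`e^{-iδ} A`, so the eigenvalues of the block matrix are those of `A` rotated by `±δ`. For
`|δ| ≤ π/2`, both rotations of `z ≠ 0` lie in the open left half plane exactly when
`|arg z| > π/2 + |δ|`.
-/

section Charpoly

variable {ι R : Type*} [Fintype ι] [DecidableEq ι] [CommRing R]

theorem charpoly_fromBlocks_neg_self {i : R} (hi : i * i = -1) (P Q : Matrix ι ι R) :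
    (fromBlocks P (-Q) Q P).charpoly = (P + i • Q).charpoly * (P - i • Q).charpoly := by
  let S (t : R) : Matrix (ι ⊕ ι) (ι ⊕ ι) R := fromBlocks 1 (t • 1) 0 1
  have inverse : S (-i) * S i = 1 := by simp [S, fromBlocks_multiply, fromBlocks_one]
  have triangular :
      S i * (fromBlocks P (-Q) Q P * S (-i)) = fromBlocks (P + i • Q) 0 Q (P - i • Q) := by
    have corner : -Q - i • P + i • (P - i • Q) = 0 := by
      rw [smul_sub, smul_smul, hi]
      module
    simp [S, fromBlocks_multiply, ← sub_eq_neg_add, corner]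
  rw [← charpoly_fromBlocks_zero₁₂, ← triangular, charpoly_mul_comm, Matrix.mul_assoc, inverse,
    Matrix.mul_one]

theorem eval_mul_charpoly_smul (A : Matrix ι ι R) (c x : R) :
    (c • A).charpoly.eval (c * x) = c ^ Fintype.card ι * A.charpoly.eval x := by
  rw [eval_charpoly, eval_charpoly, ← det_smul, smul_sub, smul_eq_diagonal_mul (scalar ι x)]
  simp

theorem forall_isRoot_charpoly_smul_iff {K : Type*} [Field K] (A : Matrix ι ι K) {c : K}
    (hc : c ≠ 0) {p : K → Prop} :
    (∀ μ, (c • A).charpoly.IsRoot μ → p μ) ↔ ∀ lam, A.charpoly.IsRoot lam → p (c * lam) := by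
  rw [(mul_left_surjective₀ hc).forall]
  simp [Polynomial.IsRoot, eval_mul_charpoly_smul, hc]

end Charpoly

section Sector

theorem cos_add_neg_and_cos_sub_neg_iff {x y : ℝ} (hx : |x| ≤ π) (hy : |y| ≤ π / 2) :
    Real.cos (x + y) < 0 ∧ Real.cos (x - y) < 0 ↔ π / 2 + |y| < |x| := by
  wlog hx0 : 0 ≤ x generalizing x
  · have reflected := this (x := -x) (by rwa [abs_neg]) (by linarith)
    rwa [neg_add_eq_sub, ← neg_add', Real.cos_neg, ← neg_sub, Real.cos_neg, and_comm,
      abs_neg] at reflected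
  wlog hy0 : 0 ≤ y generalizing y
  · have reflected := this (y := -y) (by rwa [abs_neg]) (by linarith)
    rwa [← sub_eq_add_neg, sub_neg_eq_add, and_comm, abs_neg] at reflected
  rw [abs_of_nonneg hx0] at hx ⊢
  rw [abs_of_nonneg hy0] at hy ⊢
  constructor
  · rintro ⟨-, hsub⟩
    contrapose! hsub
    exact Real.cos_nonneg_of_neg_pi_div_two_le_of_le (by linarith) (by linarith)
  · intro h
    constructor <;> exact Real.cos_neg_of_pi_div_two_lt_of_lt (by linarith) (by linarith)

theorem re_exp_mul_I_mul (θ : ℝ) (z : ℂ) :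
    (Complex.exp (θ * Complex.I) * z).re = ‖z‖ * Real.cos (z.arg + θ) := by
  nth_rw 1 [← Complex.norm_mul_exp_arg_mul_I z]
  rw [mul_left_comm, ← Complex.exp_add, ← add_mul, add_comm, ← Complex.ofReal_add,
    Complex.re_ofReal_mul, Complex.exp_ofReal_mul_I_re]

theorem re_exp_mul_I_mul_neg_and_neg_iff {δ : ℝ} (hδ : |δ| ≤ π / 2) (z : ℂ) :
    (Complex.exp (δ * Complex.I) * z).re < 0 ∧ (Complex.exp ((-δ : ℝ) * Complex.I) * z).re < 0 ↔
      z ≠ 0 ∧ |z.arg| > π / 2 + |δ| := by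
  rcases eq_or_ne z 0 with rfl | hz
  · simp
  have norm_mul_neg_iff (t : ℝ) : ‖z‖ * t < 0 ↔ t < 0 :=
    smul_neg_iff_of_pos_left (norm_pos_iff.2 hz)
  rw [re_exp_mul_I_mul, re_exp_mul_I_mul, norm_mul_neg_iff, norm_mul_neg_iff,
    ← sub_eq_add_neg, cos_add_neg_and_cos_sub_neg_iff (Complex.abs_arg_le_pi z) hδ,
    and_iff_right hz]

end Sector

section RotationBlock

variable {ι : Type*}

/-- The matrix `A₁ = [[A cos δ, -A sin δ], [A sin δ, A cos δ]]` of the stability test: the Kronecker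
product of `A` with the plane rotation of angle `δ`, indexed by `ι ⊕ ι` so that its four blocks are
multiples of `A`. -/
noncomputable def rotationBlock (A : Matrix ι ι ℂ) (δ : ℝ) : Matrix (ι ⊕ ι) (ι ⊕ ι) ℂ :=
  fromBlocks ((Real.cos δ : ℂ) • A) (-((Real.sin δ : ℂ) • A))
    ((Real.sin δ : ℂ) • A) ((Real.cos δ : ℂ) • A)

variable [Fintype ι] [DecidableEq ι]

theorem charpoly_rotationBlock (A : Matrix ι ι ℂ) (δ : ℝ) :
    (rotationBlock A δ).charpoly =
      (Complex.exp (δ * Complex.I) • A).charpoly *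
        (Complex.exp ((-δ : ℝ) * Complex.I) • A).charpoly := by
  rw [rotationBlock, charpoly_fromBlocks_neg_self Complex.I_mul_I, smul_smul, ← add_smul,
    ← sub_smul, Complex.exp_mul_I, Complex.exp_mul_I]
  simp [mul_comm, sub_eq_add_neg]

theorem block_matrix_sector_stability_general (A : Matrix ι ι ℂ) {δ : ℝ} (hδ : |δ| ≤ π / 2) :
    (∀ μ, (rotationBlock A δ).charpoly.IsRoot μ → μ.re < 0) ↔
      ∀ lam, A.charpoly.IsRoot lam → lam ≠ 0 ∧ |lam.arg| > π / 2 + |δ| := by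
  simp only [charpoly_rotationBlock, Polynomial.root_mul, or_imp, forall_and (α := ℂ),
    forall_isRoot_charpoly_smul_iff A (Complex.exp_ne_zero _)]
  simp only [← forall_and, re_exp_mul_I_mul_neg_and_neg_iff hδ]

end RotationBlock

/-- Matrix sector-stability test: for an `n × n` complex matrix `A` and
`0 ≤ δ < π/2`, all roots of the characteristic polynomial of the block matrix
`A₁ = [[A cos δ, -A sin δ], [A sin δ, A cos δ]]` have negative real part if and
only if every eigenvalue `λ` of `A` is nonzero and satisfies
`|arg λ| > π/2 + δ`. -/
theorem block_matrix_sector_stability (n : ℕ) (A : Matrix (Fin n) (Fin n) ℂ)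
    (δ : ℝ) (hδ0 : 0 ≤ δ) (hδ : δ < π / 2) :
    (∀ μ : ℂ,
        (Matrix.fromBlocks ((Real.cos δ : ℂ) • A) (-((Real.sin δ : ℂ) • A))
            ((Real.sin δ : ℂ) • A) ((Real.cos δ : ℂ) • A)).charpoly.IsRoot μ →
          μ.re < 0) ↔
      (∀ lam : ℂ, A.charpoly.IsRoot lam →
          lam ≠ 0 ∧ |Complex.arg lam| > π / 2 + δ) := by
  simpa only [rotationBlock, abs_of_nonneg hδ0] using
    block_matrix_sector_stability_general A ((abs_of_nonneg hδ0).trans_le hδ.le)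
end

section
/- Let α > 0 and β > 0 be real numbers, let f : ℝ → ℝ be continuous on [0, T] for some T > 0, and let t ∈ (0, T]. Then (1/Γ(α)) ∫_0^t (t − τ)^{α−1} [ (1/Γ(β)) ∫_0^τ (τ − u)^{β−1} f(u) du ] dτ = (1/Γ(α+β)) ∫_0^t (t − u)^{α+β−1} f(u) du. (Additive index law / semigroup property of the Riemann–Liouville fractional integral: I^α I^β f = I^{α+β} f.) -/
open Real Set intervalIntegral

/-! On `(a, t)` the integral of order `α` is convolution with the kernel `x₊^(α - 1) / Γ(α)`.
Euler's beta integral says that these kernels form a convolution semigroup in `α`, and Fubini's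
theorem transfers the semigroup law to the integrals. Since the kernels are nonnegative, absolute
convergence of the double integral is the same computation with `‖f‖` in place of `f`. -/

section RiemannLiouville

open MeasureTheory Function
open scoped Convolution

variable {E : Type*} [NormedAddCommGroup E] [NormedSpace ℝ E] {f : ℝ → E} {a t u x α β γ : ℝ}

/-- The Riemann–Liouville fractional integral of order `α` with lower terminal `a`, for functions
with values in a real normed space. It is meaningful only for `0 < α` and `a ≤ t`, since it is
built on the real power `(t - τ) ^ (α - 1)`. -/
noncomputable def riemannLiouvilleIntegral (a α : ℝ) (f : ℝ → E) (t : ℝ) : E :=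
  (1 / Gamma α) • ∫ τ in a..t, (t - τ) ^ (α - 1) • f τ

/-- The Riemann–Liouville kernel `x₊^(α - 1) / Γ(α)`, by which the fractional integral of order `α`
is a convolution. It vanishes at `x = 0` for every `α`, including `α = 1`. -/
noncomputable def riemannLiouvilleKernel (α : ℝ) : ℝ → ℝ :=
  (Ioi 0).indicator fun x => x ^ (α - 1) / Gamma α

theorem integral_rpow_mul_sub_rpow (hα : 0 < α) (hβ : 0 < β) (hx : 0 < x) :
    ∫ s in 0..x, s ^ (α - 1) * (x - s) ^ (β - 1) =
      x ^ (α + β - 1) * ProbabilityTheory.beta α β := by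
  have complex_beta := Complex.betaIntegral_scaled α β hx
  have cast_integral : ∫ s in 0..x, (s : ℂ) ^ ((α : ℂ) - 1) * ((x : ℂ) - s) ^ ((β : ℂ) - 1) =
      ((∫ s in 0..x, s ^ (α - 1) * (x - s) ^ (β - 1) : ℝ) : ℂ) := by
    rw [← intervalIntegral.integral_ofReal]
    refine intervalIntegral.integral_congr fun s hs => ?_
    rw [uIcc_of_le hx.le] at hs
    push_cast [Complex.ofReal_cpow hs.1, Complex.ofReal_cpow (sub_nonneg.2 hs.2)]
    rfl
  have cast_rpow : (x : ℂ) ^ ((α : ℂ) + β - 1) = ((x ^ (α + β - 1) : ℝ) : ℂ) := by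
    push_cast [Complex.ofReal_cpow hx.le]
    rfl
  rw [cast_integral, cast_rpow] at complex_beta
  rw [ProbabilityTheory.beta_eq_betaIntegralReal α β hα hβ, ← Complex.re_ofReal_mul,
    ← complex_beta, Complex.ofReal_re]

theorem riemannLiouvilleKernel_of_pos (hx : 0 < x) :
    riemannLiouvilleKernel α x = x ^ (α - 1) / Gamma α :=
  indicator_of_mem (mem_Ioi.2 hx) _

theorem riemannLiouvilleKernel_of_nonpos (hx : x ≤ 0) : riemannLiouvilleKernel α x = 0 :=
  indicator_of_notMem (notMem_Ioi.2 hx) _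

theorem riemannLiouvilleKernel_pos (hα : 0 < α) (hx : 0 < x) : 0 < riemannLiouvilleKernel α x := by
  rw [riemannLiouvilleKernel_of_pos hx]
  exact div_pos (rpow_pos_of_pos hx _) (Gamma_pos_of_pos hα)

theorem riemannLiouvilleKernel_nonneg (hα : 0 < α) (x : ℝ) : 0 ≤ riemannLiouvilleKernel α x :=
  indicator_nonneg
    (fun _ hs => div_nonneg (rpow_nonneg (mem_Ioi.1 hs).le _) (Gamma_pos_of_pos hα).le) x

@[fun_prop]
theorem measurable_riemannLiouvilleKernel (α : ℝ) : Measurable (riemannLiouvilleKernel α) :=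
  Measurable.indicator (by fun_prop) measurableSet_Ioi

theorem riemannLiouvilleKernel_convolution (hα : 0 < α) (hβ : 0 < β) :
    riemannLiouvilleKernel α ⋆[ContinuousLinearMap.mul ℝ ℝ] riemannLiouvilleKernel β =
      riemannLiouvilleKernel (α + β) := by
  unfold riemannLiouvilleKernel
  rw [← posConvolution_eq_convolution_indicator _ _ _ volume, posConvolution]
  refine indicator_congr fun x hx => ?_
  have hΓα := (Gamma_pos_of_pos hα).ne'
  have hΓβ := (Gamma_pos_of_pos hβ).ne'
  calc ∫ s in 0..x, s ^ (α - 1) / Gamma α * ((x - s) ^ (β - 1) / Gamma β)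
      = (∫ s in 0..x, s ^ (α - 1) * (x - s) ^ (β - 1)) / (Gamma α * Gamma β) := by
        simp only [div_mul_div_comm, intervalIntegral.integral_div]
    _ = x ^ (α + β - 1) / Gamma (α + β) := by
        rw [integral_rpow_mul_sub_rpow hα hβ hx, ProbabilityTheory.beta]
        field_simp

theorem setIntegral_riemannLiouvilleKernel_mul (hα : 0 < α) (hβ : 0 < β) (hau : a ≤ u) :
    ∫ τ in Ioo a t, riemannLiouvilleKernel α (t - τ) * riemannLiouvilleKernel β (τ - u) =
      riemannLiouvilleKernel (α + β) (t - u) := by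
  have vanishes_off_Ioo : ∀ τ ∉ Ioo a t,
      riemannLiouvilleKernel α (t - τ) * riemannLiouvilleKernel β (τ - u) = 0 := by
    intro τ hτ
    rcases le_or_gt τ a with hτa | haτ
    · rw [riemannLiouvilleKernel_of_nonpos (sub_nonpos.2 (hτa.trans hau)), mul_zero]
    · have htτ : t ≤ τ := not_lt.1 fun hτt => hτ ⟨haτ, hτt⟩
      rw [riemannLiouvilleKernel_of_nonpos (sub_nonpos.2 htτ), zero_mul]
  calc ∫ τ in Ioo a t, riemannLiouvilleKernel α (t - τ) * riemannLiouvilleKernel β (τ - u)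
      = ∫ τ, riemannLiouvilleKernel α (t - τ) * riemannLiouvilleKernel β (τ - u) :=
        setIntegral_eq_integral_of_forall_compl_eq_zero vanishes_off_Ioo
    _ = ∫ s, riemannLiouvilleKernel α s * riemannLiouvilleKernel β (t - u - s) := by
        rw [← integral_sub_left_eq_self
          (fun s => riemannLiouvilleKernel α s * riemannLiouvilleKernel β (t - u - s)) volume t]
        simp only [sub_sub_sub_cancel_left]
    _ = riemannLiouvilleKernel (α + β) (t - u) :=
        congrFun (riemannLiouvilleKernel_convolution hα hβ) (t - u)

theorem integrableOn_riemannLiouvilleKernel_mul (hα : 0 < α) (hβ : 0 < β) (hau : a ≤ u)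
    (hut : u < t) :
    IntegrableOn (fun τ => riemannLiouvilleKernel α (t - τ) * riemannLiouvilleKernel β (τ - u))
      (Ioo a t) := by
  apply Integrable.of_integral_ne_zero
  rw [setIntegral_riemannLiouvilleKernel_mul hα hβ hau]
  exact (riemannLiouvilleKernel_pos (add_pos hα hβ) (sub_pos.2 hut)).ne'

theorem riemannLiouvilleIntegral_eq_setIntegral {s : ℝ} (has : a ≤ s) (hst : s ≤ t) :
    riemannLiouvilleIntegral a α f s =
      ∫ τ in Ioo a t, riemannLiouvilleKernel α (s - τ) • f τ := by
  have vanishes_off_Ioo : ∀ τ ∈ Ioo a t \ Ioo a s, riemannLiouvilleKernel α (s - τ) • f τ = 0 := by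
    intro τ hτ
    have hsτ : s ≤ τ := not_lt.1 fun hτs => hτ.2 ⟨hτ.1.1, hτs⟩
    rw [riemannLiouvilleKernel_of_nonpos (sub_nonpos.2 hsτ), zero_smul]
  rw [setIntegral_eq_of_subset_of_forall_sdiff_eq_zero measurableSet_Ioo
    (Ioo_subset_Ioo_right hst) vanishes_off_Ioo, riemannLiouvilleIntegral, integral_of_le has,
    integral_Ioc_eq_integral_Ioo, ← MeasureTheory.integral_smul]
  refine setIntegral_congr_fun measurableSet_Ioo fun τ hτ => ?_
  simp only [riemannLiouvilleKernel_of_pos (sub_pos.2 hτ.2), smul_smul, one_div_mul_eq_div]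

theorem integrableOn_riemannLiouvilleKernel_smul
    (hf : IntegrableOn (fun u => (t - u) ^ (γ - 1) • f u) (Ioo a t)) :
    IntegrableOn (fun u => riemannLiouvilleKernel γ (t - u) • f u) (Ioo a t) := by
  refine IntegrableOn.congr_fun (hf.smul (1 / Gamma γ)) (fun u hu => ?_) measurableSet_Ioo
  simp only [Pi.smul_apply, riemannLiouvilleKernel_of_pos (sub_pos.2 hu.2), smul_smul,
    one_div_mul_eq_div]

theorem intervalIntegrable_sub_rpow_smul (hγ : -1 < γ) (hf : ContinuousOn f (uIcc a t)) :
    IntervalIntegrable (fun u => (t - u) ^ γ • f u) volume a t := by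
  have weight : IntervalIntegrable (fun u => (t - u) ^ γ) volume a t := by
    simpa using (intervalIntegrable_rpow' (a := t - a) (b := 0) hγ).comp_sub_left t
  exact weight.smul_continuousOn hf

theorem aestronglyMeasurable_of_sub_rpow_smul
    (hf : AEStronglyMeasurable (fun u => (t - u) ^ γ • f u) (volume.restrict (Ioo a t))) :
    AEStronglyMeasurable f (volume.restrict (Ioo a t)) := by
  have weight_inv : Measurable fun u : ℝ => ((t - u) ^ γ)⁻¹ := by fun_prop
  refine (weight_inv.aestronglyMeasurable.smul hf).congr ?_
  filter_upwards [ae_restrict_mem measurableSet_Ioo] with u hu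
  exact inv_smul_smul₀ (rpow_pos_of_pos (sub_pos.2 hu.2) γ).ne' (f u)

theorem integrable_riemannLiouvilleKernel_smul_smul (hα : 0 < α) (hβ : 0 < β)
    (hf : IntegrableOn (fun u => (t - u) ^ (α + β - 1) • f u) (Ioo a t)) :
    Integrable
      (uncurry fun τ u => riemannLiouvilleKernel α (t - τ) • riemannLiouvilleKernel β (τ - u) • f u)
      ((volume.restrict (Ioo a t)).prod (volume.restrict (Ioo a t))) := by
  have kernel_measurable : Measurable fun p : ℝ × ℝ =>
      riemannLiouvilleKernel α (t - p.1) * riemannLiouvilleKernel β (p.1 - p.2) := by fun_prop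
  have norm_integral : ∀ u ∈ Ioo a t,
      ∫ τ in Ioo a t,
        ‖(riemannLiouvilleKernel α (t - τ) * riemannLiouvilleKernel β (τ - u)) • f u‖ =
      ‖riemannLiouvilleKernel (α + β) (t - u) • f u‖ := by
    intro u hu
    simp only [norm_smul, norm_mul, norm_of_nonneg (riemannLiouvilleKernel_nonneg hα _),
      norm_of_nonneg (riemannLiouvilleKernel_nonneg hβ _),
      norm_of_nonneg (riemannLiouvilleKernel_nonneg (add_pos hα hβ) _)]
    rw [MeasureTheory.integral_mul_const, setIntegral_riemannLiouvilleKernel_mul hα hβ hu.1.le]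
  simp only [smul_smul]
  refine (integrable_prod_iff' ?_).2 ⟨?_, ?_⟩
  · exact kernel_measurable.aestronglyMeasurable.smul
      (aestronglyMeasurable_of_sub_rpow_smul hf.aestronglyMeasurable).comp_snd
  · filter_upwards [ae_restrict_mem measurableSet_Ioo] with u hu
    exact (integrableOn_riemannLiouvilleKernel_mul hα hβ hu.1.le hu.2).smul_const (f u)
  · exact IntegrableOn.congr_fun (integrableOn_riemannLiouvilleKernel_smul hf).norm
      (fun u hu => (norm_integral u hu).symm) measurableSet_Ioo

theorem riemann_liouville_semigroup_general [CompleteSpace E] (hα : 0 < α) (hβ : 0 < β)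
    (hat : a ≤ t) (hf : IntervalIntegrable (fun u => (t - u) ^ (α + β - 1) • f u) volume a t) :
    riemannLiouvilleIntegral a α (riemannLiouvilleIntegral a β f) t =
      riemannLiouvilleIntegral a (α + β) f t := by
  rw [intervalIntegrable_iff_integrableOn_Ioo_of_le hat] at hf
  calc riemannLiouvilleIntegral a α (riemannLiouvilleIntegral a β f) t
      = ∫ τ in Ioo a t, riemannLiouvilleKernel α (t - τ) • riemannLiouvilleIntegral a β f τ :=
        riemannLiouvilleIntegral_eq_setIntegral hat le_rfl
    _ = ∫ τ in Ioo a t, ∫ u in Ioo a t,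
          riemannLiouvilleKernel α (t - τ) • riemannLiouvilleKernel β (τ - u) • f u := by
        refine setIntegral_congr_fun measurableSet_Ioo fun τ hτ => ?_
        simp only [riemannLiouvilleIntegral_eq_setIntegral hτ.1.le hτ.2.le,
          MeasureTheory.integral_smul]
    _ = ∫ u in Ioo a t, ∫ τ in Ioo a t,
          riemannLiouvilleKernel α (t - τ) • riemannLiouvilleKernel β (τ - u) • f u :=
        integral_integral_swap (integrable_riemannLiouvilleKernel_smul_smul hα hβ hf)
    _ = ∫ u in Ioo a t, riemannLiouvilleKernel (α + β) (t - u) • f u := by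
        refine setIntegral_congr_fun measurableSet_Ioo fun u hu => ?_
        simp only [smul_smul, _root_.integral_smul_const,
          setIntegral_riemannLiouvilleKernel_mul hα hβ hu.1.le]
    _ = riemannLiouvilleIntegral a (α + β) f t :=
        (riemannLiouvilleIntegral_eq_setIntegral hat le_rfl).symm

end RiemannLiouville

/-- Additive index law (semigroup property) of the Riemann–Liouville fractional
integral: for `α, β > 0`, `f` continuous on `[0, T]` and `t ∈ (0, T]`,
`I^α (I^β f) (t) = I^{α+β} f (t)`. -/
theorem riemann_liouville_semigroup (α β T : ℝ) (hα : 0 < α) (hβ : 0 < β)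
    (hT : 0 < T) (f : ℝ → ℝ) (hf : ContinuousOn f (Icc 0 T))
    (t : ℝ) (ht : t ∈ Ioc 0 T) :
    (1 / Real.Gamma α) * ∫ τ in (0 : ℝ)..t, (t - τ) ^ (α - 1) *
        ((1 / Real.Gamma β) * ∫ u in (0 : ℝ)..τ, (τ - u) ^ (β - 1) * f u) =
      (1 / Real.Gamma (α + β)) *
        ∫ u in (0 : ℝ)..t, (t - u) ^ (α + β - 1) * f u := by
  have hf' : ContinuousOn f (uIcc 0 t) :=
    hf.mono (uIcc_of_le ht.1.le ▸ Icc_subset_Icc_right ht.2)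
  exact riemann_liouville_semigroup_general hα hβ ht.1.le
    (intervalIntegrable_sub_rpow_smul (by linarith) hf')
end

section
/- Consider the polynomial P(w) = (4/5)·w^22 + (1/2)·w^9 + 1 over ℂ (obtained from the characteristic pseudo-polynomial 0.8 s^{2.2} + 0.5 s^{0.9} + 1 by the substitution w = s^{1/10}). There exists a root w of P with |arg w| < π/10, and every root w of P with |arg w| < π/10 satisfies |arg w| > π/20. (Hence the fractional-order system 0.8 D^{2.2} y + 0.5 D^{0.9} y + y = u is stable: all roots on the first Riemann sheet lie in the stable sector.) -/
open Real

/-!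
Let `w = r e^{it}` be a root of `a w^(n+k) + b w^n + 1` with `a, b > 0`. Multiplying the equation by
`e^{-int}`, respectively `e^{-i(n+k)t}`, and taking imaginary parts removes one of its terms:
`a r^(n+k) sin (kt) = sin (nt)` and `b r^n sin (kt) = -sin ((n+k)t)`. Conversely these relations
give back the equation as soon as `sin (kt) ≠ 0`.

Existence: eliminating `r` leaves the single equation
`a^n (-sin ((n+k)t))^(n+k) = b^(n+k) sin (nt)^n sin (kt)^k`. Its left side vanishes at `t = π/(n+k)`
and its right side at `t = π/k`, so the intermediate value theorem gives a solution in between.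

Stability: for `0 ≤ t < 2π/(n+k)` and `n < k` the relations force `π/(n+k) < t < π/k`, hence
`sin (nt) > sin (kt) > 0` and `a r^(n+k) > 1`. If `a ≤ 1` then `r > 1`, so `r^n > 1`, that is
`-sin ((n+k)t) > b sin (kt)`, which for the given coefficients fails up to `t = π/20`.
-/

/-- The characteristic function `a s^((n+k)/q) + b s^(n/q) + 1` of a two-term fractional-order
system, written in the variable `w = s^(1/q)`. The larger exponent is encoded as `n + k` because
the gap `k` governs the arguments of the roots. -/
def charTrinomial (a b : ℝ) (n k : ℕ) (w : ℂ) : ℂ :=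
  a * w ^ (n + k) + b * w ^ n + 1

variable {a b r t : ℝ} {n k : ℕ}

lemma charTrinomial_polar :
    charTrinomial a b n k (r * (Complex.cos t + Complex.sin t * Complex.I)) =
      ⟨a * r ^ (n + k) * cos ((n + k) * t) + b * r ^ n * cos (n * t) + 1,
        a * r ^ (n + k) * sin ((n + k) * t) + b * r ^ n * sin (n * t)⟩ := by
  rw [charTrinomial, mul_pow, mul_pow, Complex.cos_add_sin_mul_I_pow,
    Complex.cos_add_sin_mul_I_pow, Complex.mk_eq_add_mul_I]
  push_cast
  ring

lemma charTrinomial_polar_eq_zero_iff :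
    charTrinomial a b n k (r * (Complex.cos t + Complex.sin t * Complex.I)) = 0 ↔
      a * r ^ (n + k) * cos ((n + k) * t) + b * r ^ n * cos (n * t) + 1 = 0 ∧
        a * r ^ (n + k) * sin ((n + k) * t) + b * r ^ n * sin (n * t) = 0 := by
  rw [charTrinomial_polar, Complex.ext_iff, Complex.zero_re, Complex.zero_im]

lemma sin_relations_of_charTrinomial_polar_eq_zero
    (h : charTrinomial a b n k (r * (Complex.cos t + Complex.sin t * Complex.I)) = 0) :
    a * r ^ (n + k) * sin (k * t) = sin (n * t) ∧
      b * r ^ n * sin (k * t) = -sin ((n + k) * t) := by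
  obtain ⟨hre, him⟩ := charTrinomial_polar_eq_zero_iff.mp h
  have hk : (k : ℝ) * t = (n + k) * t - n * t := by ring
  rw [hk, sin_sub]
  constructor
  · linear_combination cos (n * t) * him - sin (n * t) * hre
  · linear_combination sin ((n + k) * t) * hre - cos ((n + k) * t) * him

lemma charTrinomial_polar_eq_zero_of_sin_relations (hk : sin (k * t) ≠ 0)
    (hn : a * r ^ (n + k) * sin (k * t) = sin (n * t))
    (hnk : b * r ^ n * sin (k * t) = -sin ((n + k) * t)) :
    charTrinomial a b n k (r * (Complex.cos t + Complex.sin t * Complex.I)) = 0 := by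
  rw [charTrinomial_polar_eq_zero_iff]
  have hsub : sin (k * t) = sin ((n + k) * t) * cos (n * t) - cos ((n + k) * t) * sin (n * t) := by
    rw [← sin_sub]
    ring_nf
  constructor <;> apply mul_right_cancel₀ hk
  · linear_combination cos ((n + k) * t) * hn + cos (n * t) * hnk + hsub
  · linear_combination sin ((n + k) * t) * hn + sin (n * t) * hnk

lemma exists_pos_charTrinomial_polar_abs_arg_eq_zero (hn : 0 < n) {w : ℂ}
    (hw : charTrinomial a b n k w = 0) :
    ∃ r : ℝ, 0 < r ∧ charTrinomial a b n k
      (r * (Complex.cos ↑|w.arg| + Complex.sin ↑|w.arg| * Complex.I)) = 0 := by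
  have hw0 : w ≠ 0 := by
    rintro rfl
    simp [charTrinomial, hn.ne'] at hw
  refine ⟨‖w‖, norm_pos_iff.mpr hw0, ?_⟩
  rw [← Complex.norm_mul_cos_add_sin_mul_I w, charTrinomial_polar_eq_zero_iff] at hw
  obtain ⟨hre, him⟩ := hw
  rw [charTrinomial_polar_eq_zero_iff]
  rcases abs_choice w.arg with habs | habs <;> rw [habs]
  · exact ⟨hre, him⟩
  · simp only [mul_neg, cos_neg, sin_neg]
    exact ⟨hre, by linear_combination -him⟩

lemma sin_mul_pos_of_lt_pi_div {x y : ℝ} (hx : 0 < x) (hxy : x ≤ y) (ht : 0 < t) (hty : t < π / y) :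
    0 < sin (x * t) := by
  refine sin_pos_of_pos_of_lt_pi (by positivity) ?_
  calc x * t ≤ y * t := by gcongr
    _ < π := by rwa [mul_comm, ← lt_div_iff₀ (hx.trans_le hxy)]

lemma sin_add_mul_neg (hnk : n < k) (ht : π / (n + k) < t) (htk : t < π / k) :
    sin ((n + k) * t) < 0 := by
  have hnk' : (n : ℝ) < k := by exact_mod_cast hnk
  have hk : (0 : ℝ) < k := n.cast_nonneg.trans_lt hnk'
  have ht0 : 0 < t := lt_trans (by positivity) ht
  rw [div_lt_iff₀ (by positivity)] at ht
  rw [lt_div_iff₀ hk] at htk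
  have hpos : 0 < sin ((n + k) * t - π) :=
    sin_pos_of_pos_of_lt_pi (by linarith) (by nlinarith)
  rw [sin_sub_pi] at hpos
  linarith

lemma sin_mul_lt_sin_mul (hnk : n < k) (ht : π / (n + k) < t) (htk : t < π / k) :
    sin (k * t) < sin (n * t) := by
  have hnk' : (n : ℝ) < k := by exact_mod_cast hnk
  have hk : (0 : ℝ) < k := n.cast_nonneg.trans_lt hnk'
  have ht0 : 0 < t := lt_trans (by positivity) ht
  rw [div_lt_iff₀ (by positivity)] at ht
  rw [lt_div_iff₀ hk] at htk
  have : 0 ≤ (n : ℝ) * t := by positivity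
  have hnkt : n * t < k * t := by gcongr
  have hsin : 0 < sin ((k * t - n * t) / 2) := sin_pos_of_pos_of_lt_pi (by linarith) (by linarith)
  have hcos : cos ((k * t + n * t) / 2) < 0 :=
    cos_neg_of_pi_div_two_lt_of_lt (by linarith) (by linarith)
  rw [← sub_neg, sin_sub_sin]
  exact mul_neg_of_pos_of_neg (by positivity) hcos

lemma exists_sin_pow_eq (ha : 0 < a) (hb : 0 < b) (hn : 0 < n) (hnk : n < k) :
    ∃ t ∈ Set.Ioo (π / (n + k)) (π / k),
      a ^ n * (-sin ((n + k) * t)) ^ (n + k) =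
        b ^ (n + k) * (sin (n * t) ^ n * sin (k * t) ^ k) := by
  have hn' : (0 : ℝ) < n := by exact_mod_cast hn
  have hnk' : (n : ℝ) < k := by exact_mod_cast hnk
  have hk' : (0 : ℝ) < k := hn'.trans hnk'
  have hlt : π / (n + k) < π / k := by gcongr; linarith
  let f : ℝ → ℝ := fun t ↦ a ^ n * (-sin ((n + k) * t)) ^ (n + k) -
    b ^ (n + k) * (sin (n * t) ^ n * sin (k * t) ^ k)
  have hf_left : f (π / (n + k)) < 0 := by
    have hsn := sin_mul_pos_of_lt_pi_div hn' hnk'.le (by positivity) hlt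
    have hsk := sin_mul_pos_of_lt_pi_div hk' le_rfl (by positivity) hlt
    have hsnk : sin ((n + k) * (π / (n + k))) = 0 := by
      rw [mul_div_cancel₀ _ (by positivity), sin_pi]
    simp only [f, hsnk, neg_zero, zero_pow (by lia : n + k ≠ 0), mul_zero, zero_sub]
    exact neg_neg_of_pos (by positivity)
  have hf_right : 0 < f (π / k) := by
    have hsn := sin_mul_pos_of_lt_pi_div hn' le_rfl (by positivity) (by gcongr : π / k < π / n)
    have hkπ : k * (π / k) = π := mul_div_cancel₀ _ hk'.ne'
    have hsnk : -sin ((n + k) * (π / k)) = sin (n * (π / k)) := by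
      rw [add_mul, hkπ, sin_add_pi, neg_neg]
    simp only [f, hkπ, hsnk, sin_pi, zero_pow (by lia : k ≠ 0), mul_zero, sub_zero]
    positivity
  obtain ⟨t, ht, hft⟩ := intermediate_value_Ioo hlt.le (by fun_prop) ⟨hf_left, hf_right⟩
  exact ⟨t, ht, sub_eq_zero.mp hft⟩

lemma exists_pos_pow_eq_pow_eq {x y : ℝ} {m : ℕ} (hm : m ≠ 0) (hx : 0 < x) (hy : 0 ≤ y)
    (hxy : x ^ n = y ^ m) : ∃ r : ℝ, 0 < r ∧ r ^ m = x ∧ r ^ n = y := by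
  have hroot : (x ^ (m : ℝ)⁻¹) ^ m = x := rpow_inv_natCast_pow hx.le hm
  refine ⟨x ^ (m : ℝ)⁻¹, by positivity, hroot, ?_⟩
  rw [← pow_left_inj₀ (by positivity) hy hm, ← pow_mul, mul_comm, pow_mul, hroot, hxy]

theorem exists_charTrinomial_eq_zero_arg_mem_Ioo (ha : 0 < a) (hb : 0 < b) (hn : 0 < n)
    (hnk : n < k) :
    ∃ w : ℂ, charTrinomial a b n k w = 0 ∧ w.arg ∈ Set.Ioo (π / (n + k)) (π / k) := by
  have hn' : (0 : ℝ) < n := by exact_mod_cast hn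
  have hnk' : (n : ℝ) ≤ k := by exact_mod_cast hnk.le
  have hk' : (0 : ℝ) < k := hn'.trans_le hnk'
  obtain ⟨t, ⟨ht, htk⟩, heq⟩ := exists_sin_pow_eq ha hb hn hnk
  have ht0 : 0 < t := lt_trans (by positivity) ht
  have hsn := sin_mul_pos_of_lt_pi_div hn' hnk' ht0 htk
  have hsk := sin_mul_pos_of_lt_pi_div hk' le_rfl ht0 htk
  have hsnk := neg_pos.mpr (sin_add_mul_neg hnk ht htk)
  have hpow : (sin (n * t) / (a * sin (k * t))) ^ n =
      (-sin ((n + k) * t) / (b * sin (k * t))) ^ (n + k) := by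
    rw [div_pow, div_pow, div_eq_div_iff (by positivity) (by positivity)]
    linear_combination -sin (k * t) ^ n * heq
  obtain ⟨r, hr, hr_nk, hr_n⟩ :=
    exists_pos_pow_eq_pow_eq (by lia) (by positivity) (by positivity) hpow
  refine ⟨r * (Complex.cos t + Complex.sin t * Complex.I),
    charTrinomial_polar_eq_zero_of_sin_relations hsk.ne' ?_ ?_, ?_⟩
  · rw [hr_nk, mul_right_comm, mul_div_cancel₀ _ (by positivity)]
  · rw [hr_n, mul_right_comm, mul_div_cancel₀ _ (by positivity)]
  · have htπ : t ≤ π := htk.le.trans (div_le_self pi_pos.le (by exact_mod_cast hn.trans hnk))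
    rw [Complex.arg_mul_cos_add_sin_mul_I hr ⟨by linarith, htπ⟩]
    exact ⟨ht, htk⟩

lemma pi_div_lt_of_charTrinomial_polar_eq_zero (ha : 0 < a) (hb : 0 < b) (hn : 0 < n) (hk : 0 < k)
    (hr : 0 < r) (ht : 0 ≤ t)
    (h : charTrinomial a b n k (r * (Complex.cos t + Complex.sin t * Complex.I)) = 0) :
    π / (n + k) < t := by
  have hn' : (0 : ℝ) < n := by exact_mod_cast hn
  have hk' : (0 : ℝ) < k := by exact_mod_cast hk
  by_contra! hle
  obtain rfl | ht0 := ht.eq_or_lt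
  · have hre := (charTrinomial_polar_eq_zero_iff.mp h).1
    simp only [mul_zero, cos_zero, mul_one] at hre
    have : 0 < a * r ^ (n + k) + b * r ^ n + 1 := by positivity
    exact this.ne' hre
  · have hsk : 0 < sin (k * t) :=
      sin_mul_pos_of_lt_pi_div hk' le_rfl ht0 (hle.trans_lt (by gcongr; linarith))
    have hsnk : 0 ≤ sin ((n + k) * t) :=
      sin_nonneg_of_nonneg_of_le_pi (by positivity)
        (by rwa [mul_comm, ← le_div_iff₀ (by positivity)])
    have hrel := (sin_relations_of_charTrinomial_polar_eq_zero h).2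
    have : 0 < b * r ^ n * sin (k * t) := by positivity
    linarith

lemma lt_pi_div_of_charTrinomial_polar_eq_zero (ha : 0 < a) (hn : 0 < n) (hnk : n < k) (hr : 0 < r)
    (ht0 : 0 < t) (ht : t < 2 * π / (n + k))
    (h : charTrinomial a b n k (r * (Complex.cos t + Complex.sin t * Complex.I)) = 0) :
    t < π / k := by
  have hn' : (0 : ℝ) < n := by exact_mod_cast hn
  have hnk' : (n : ℝ) < k := by exact_mod_cast hnk
  have hk' : (0 : ℝ) < k := hn'.trans hnk'
  rw [lt_div_iff₀ (by positivity)] at ht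
  by_contra! hle
  rw [div_le_iff₀ hk'] at hle
  have hnt : 0 < n * t := by positivity
  have hnkt : n * t < k * t := by gcongr
  have hsn : 0 < sin (n * t) := sin_pos_of_pos_of_lt_pi hnt (by linarith [hnkt])
  have hsk : 0 ≤ sin (k * t - π) := sin_nonneg_of_nonneg_of_le_pi (by linarith) (by linarith)
  rw [sin_sub_pi] at hsk
  have hrel := (sin_relations_of_charTrinomial_polar_eq_zero h).1
  have : a * r ^ (n + k) * sin (k * t) ≤ 0 :=
    mul_nonpos_of_nonneg_of_nonpos (by positivity) (by linarith)
  linarith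

lemma mul_sin_lt_neg_sin_of_charTrinomial_polar_eq_zero (ha : a ≤ 1) (hb : 0 < b) (hn : 0 < n)
    (hnk : n < k) (hr : 0 ≤ r) (ht : π / (n + k) < t) (htk : t < π / k)
    (h : charTrinomial a b n k (r * (Complex.cos t + Complex.sin t * Complex.I)) = 0) :
    b * sin (k * t) < -sin ((n + k) * t) := by
  obtain ⟨hrel_n, hrel_nk⟩ := sin_relations_of_charTrinomial_polar_eq_zero h
  have hk' : (0 : ℝ) < k := by exact_mod_cast hn.trans hnk
  have hsk : 0 < sin (k * t) :=
    sin_mul_pos_of_lt_pi_div hk' le_rfl (lt_trans (by positivity) ht) htk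
  have hpow : 1 < r ^ (n + k) := by
    have : 1 < a * r ^ (n + k) := by
      rw [← lt_mul_iff_one_lt_left hsk, hrel_n]
      exact sin_mul_lt_sin_mul hnk ht htk
    exact this.trans_le (mul_le_of_le_one_left (by positivity) ha)
  have hr1 : 1 < r := (one_lt_pow_iff_of_nonneg hr (by lia)).mp hpow
  rw [← hrel_nk]
  gcongr
  exact lt_mul_of_one_lt_right hb (one_lt_pow₀ hr1 hn.ne')

theorem lt_abs_arg_of_charTrinomial_eq_zero (ha : 0 < a) (ha1 : a ≤ 1) (hb : 0 < b) (hn : 0 < n)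
    (hnk : n < k) {θ : ℝ} (hθ : θ < 2 * π / (n + k))
    (hsin : ∀ t ∈ Set.Ioc (π / (n + k)) θ, -sin ((n + k) * t) ≤ b * sin (k * t))
    {w : ℂ} (hw : charTrinomial a b n k w = 0) : θ < |w.arg| := by
  by_contra! hle
  obtain ⟨r, hr, hroot⟩ := exists_pos_charTrinomial_polar_abs_arg_eq_zero hn hw
  have hlower : π / (n + k) < |w.arg| :=
    pi_div_lt_of_charTrinomial_polar_eq_zero ha hb hn (hn.trans hnk) hr (abs_nonneg _) hroot
  have hupper : |w.arg| < π / k :=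
    lt_pi_div_of_charTrinomial_polar_eq_zero ha hn hnk hr (lt_trans (by positivity) hlower)
      (hle.trans_lt hθ) hroot
  exact (hsin _ ⟨hlower, hle⟩).not_gt <|
    mul_sin_lt_neg_sin_of_charTrinomial_polar_eq_zero ha1 hb hn hnk hr.le hlower hupper hroot

lemma neg_sin_twentyTwo_mul_le (ht : π / 22 < t) (ht' : t ≤ π / 20) :
    -sin (22 * t) ≤ 1 / 2 * sin (13 * t) := by
  have hsmall : sin (22 * t - π) ≤ π / 10 := (sin_le (by linarith)).trans (by linarith)
  have hjordan : 7 / 10 ≤ sin (π - 13 * t) :=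
    calc (7 / 10 : ℝ) = 2 / π * (7 * π / 20) := by field_simp; norm_num
      _ ≤ 2 / π * (π - 13 * t) := by gcongr; linarith
      _ ≤ sin (π - 13 * t) := mul_le_sin (by linarith) (by linarith)
  rw [sin_sub_pi] at hsmall
  rw [sin_pi_sub] at hjordan
  linarith [pi_lt_d2]

/-- Stability of the fractional-order system `0.8 D^{2.2} y + 0.5 D^{0.9} y + y = u`:
for the polynomial `P(w) = (4/5) w²² + (1/2) w⁹ + 1` (obtained by `w = s^{1/10}`),
there is a root with `|arg w| < π/10`, and every root on the first Riemann sheet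
`|arg w| < π/10` lies in the stable sector `|arg w| > π/20`. -/
theorem example4_stability :
    (∃ w : ℂ, (4 / 5) * w ^ 22 + (1 / 2) * w ^ 9 + 1 = 0 ∧
        |Complex.arg w| < π / 10) ∧
      ∀ w : ℂ, (4 / 5) * w ^ 22 + (1 / 2) * w ^ 9 + 1 = 0 →
        |Complex.arg w| < π / 10 → |Complex.arg w| > π / 20 := by
  have hP (w : ℂ) : (4 / 5) * w ^ 22 + (1 / 2) * w ^ 9 + 1 =
      charTrinomial (4 / 5) (1 / 2) 9 13 w := by
    norm_num [charTrinomial]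
  have hdeg : ((9 : ℕ) + (13 : ℕ) : ℝ) = 22 := by norm_num
  have hπ := pi_pos
  simp only [hP]
  constructor
  · obtain ⟨w, hw, hlower, hupper⟩ := exists_charTrinomial_eq_zero_arg_mem_Ioo
      (a := 4 / 5) (b := 1 / 2) (n := 9) (k := 13)
      (by norm_num) (by norm_num) (by norm_num) (by norm_num)
    rw [hdeg] at hlower
    rw [Nat.cast_ofNat] at hupper
    exact ⟨w, hw, abs_lt.mpr ⟨by linarith, by linarith⟩⟩
  · intro w hw _
    refine lt_abs_arg_of_charTrinomial_eq_zero (by norm_num) (by norm_num) (by norm_num)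
      (by norm_num) (by norm_num) ?_ ?_ hw <;> rw [hdeg]
    · linarith
    · exact fun t ht ↦ neg_sin_twentyTwo_mul_le ht.1 ht.2
end
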